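/- arXiv:1503.02716 — 7 statements merged into one kernel-verified Lean document; each statement's English description precedes it below -/
import Mathlib

section
/- Let $d \ge 3$, let $a \ge -\left(\tfrac{d-2}{2}\right)^2$ be real, and set $\sigma = \tfrac{d-2}{2} - \tfrac12\sqrt{(d-2)^2+4a}$. Then for every $\phi \in C_c^\infty(\mathbb{R}^d\setminus\{0\})$ (complex-valued) one has the identity $\int_{\mathbb{R}^d} |\nabla\phi(x)|^2 + \tfrac{a}{|x|^2}|\phi(x)|^2\,dx = \int_{\mathbb{R}^d} \bigl|\nabla\phi(x) + \sigma\tfrac{x}{|x|^2}\phi(x)\bigr|^2\,dx$; in particular the left-hand side is nonnegative. -/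
open MeasureTheory


lemma aux_int {d : ℕ} (G : EuclideanSpace ℝ (Fin d) → ℝ) (hG : ContDiff ℝ 1 G)
    (hc : HasCompactSupport G) (v : EuclideanSpace ℝ (Fin d)) :
    Integrable (fun x => fderiv ℝ G x v) ∧ ∫ x, fderiv ℝ G x v = 0 := by
  have hi : Integrable (fun x => fderiv ℝ G x v) := by
    apply Continuous.integrable_of_hasCompactSupport
    · exact (hG.continuous_fderiv (by norm_num)).clm_apply continuous_const
    · exact hc.fderiv_apply (𝕜 := ℝ) v
  refine ⟨hi, ?_⟩
  have h := integral_mul_fderiv_eq_neg_fderiv_mul_of_integrable (μ := volume) (𝕜 := ℝ)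
    (f := fun _ : EuclideanSpace ℝ (Fin d) => (1 : ℝ)) (g := G) (v := v)
    (by simp) (by simpa using hi)
    (by simpa using hG.continuous.integrable_of_hasCompactSupport hc)
    (fun _ _ => by fun_prop) (fun x _ => hG.differentiable (by norm_num) x)
  simpa using h

lemma aux_deriv {d : ℕ} (φ : EuclideanSpace ℝ (Fin d) → ℂ) (x : EuclideanSpace ℝ (Fin d))
    (hx : x ≠ 0) (hφ : DifferentiableAt ℝ φ x) (i : Fin d) :
    fderiv ℝ (fun y : EuclideanSpace ℝ (Fin d) => y i * (‖y‖ ^ 2)⁻¹ * ‖φ y‖ ^ 2) x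
      (EuclideanSpace.single i 1)
    = ((‖x‖ ^ 2)⁻¹ - 2 * x i ^ 2 * ((‖x‖ ^ 2)⁻¹) ^ 2) * ‖φ x‖ ^ 2
      + x i * (‖x‖ ^ 2)⁻¹ * (2 * inner ℝ (φ x) (fderiv ℝ φ x (EuclideanSpace.single i 1))) := by
  have hn : ‖x‖ ^ 2 ≠ 0 := by simpa using hx
  have h1 : HasFDerivAt (fun y : EuclideanSpace ℝ (Fin d) => y i)
      (EuclideanSpace.proj i : EuclideanSpace ℝ (Fin d) →L[ℝ] ℝ) x :=
    (EuclideanSpace.proj i : EuclideanSpace ℝ (Fin d) →L[ℝ] ℝ).hasFDerivAt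
  have h2 := (hasFDerivAt_id (𝕜 := ℝ) x).norm_sq
  have h3 := (hasDerivAt_inv hn).comp_hasFDerivAt x h2
  have h4 := hφ.hasFDerivAt.norm_sq
  have h5 := (h1.mul h3).mul h4
  have h6 := congrArg (fun L => L (EuclideanSpace.single i (1 : ℝ))) h5.fderiv
  refine Eq.trans ?_ (h6.trans ?_)
  · rfl
  · simp [EuclideanSpace.inner_single_right]
    ring

lemma aux_smooth {d : ℕ} (φ : EuclideanSpace ℝ (Fin d) → ℂ)
    (hφ : ContDiff ℝ (⊤ : ℕ∞) φ)
    (hφ0 : (0 : EuclideanSpace ℝ (Fin d)) ∉ tsupport φ) (i : Fin d) :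
    ContDiff ℝ 1 (fun y : EuclideanSpace ℝ (Fin d) => y i * (‖y‖ ^ 2)⁻¹ * ‖φ y‖ ^ 2) := by
  rw [contDiff_iff_contDiffAt]
  intro x
  by_cases hx : x ∈ tsupport φ
  · have hx0 : x ≠ 0 := fun h => hφ0 (h ▸ hx)
    have hn : ‖x‖ ^ 2 ≠ 0 := by simpa using hx0
    have h1 : ContDiffAt ℝ 1 (fun y : EuclideanSpace ℝ (Fin d) => y i) x :=
      (EuclideanSpace.proj i : EuclideanSpace ℝ (Fin d) →L[ℝ] ℝ).contDiff.contDiffAt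
    have h2 : ContDiffAt ℝ 1 (fun y : EuclideanSpace ℝ (Fin d) => ‖y‖ ^ 2) x :=
      contDiffAt_id.norm_sq ℝ
    have h3 : ContDiffAt ℝ 1 (fun y => ‖φ y‖ ^ 2) x :=
      (hφ.contDiffAt.of_le (by exact_mod_cast le_top)).norm_sq ℝ
    exact (h1.mul (h2.inv hn)).mul h3
  · have h := notMem_tsupport_iff_eventuallyEq.mp hx
    refine ContDiffAt.congr_of_eventuallyEq (f := fun _ => (0 : ℝ)) contDiffAt_const ?_
    filter_upwards [h] with y hy
    simp [hy]

/-- For `d ≥ 3`, `a ≥ -((d-2)/2)²`, `σ = (d-2)/2 - √((d-2)²+4a)/2`, and every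
`φ ∈ C_c^∞(ℝ^d \ {0}; ℂ)`, one has
`∫ |∇φ|² + a|φ|²/|x|² dx = ∫ |∇φ + σ x φ /|x|²|² dx`, and in particular the
left-hand side is nonnegative. -/
theorem factorization_identity (d : ℕ) (hd : 3 ≤ d) (a : ℝ)
    (ha : -(((d : ℝ) - 2) / 2) ^ 2 ≤ a) (σ : ℝ)
    (hσ : σ = ((d : ℝ) - 2) / 2 - Real.sqrt (((d : ℝ) - 2) ^ 2 + 4 * a) / 2)
    (φ : EuclideanSpace ℝ (Fin d) → ℂ)
    (hφ : ContDiff ℝ (⊤ : ℕ∞) φ) (hφc : HasCompactSupport φ)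
    (hφ0 : (0 : EuclideanSpace ℝ (Fin d)) ∉ tsupport φ) :
    (∫ x, ((∑ i : Fin d, ‖fderiv ℝ φ x (EuclideanSpace.single i 1)‖ ^ 2)
        + (a / ‖x‖ ^ 2) * ‖φ x‖ ^ 2) =
      ∫ x, ∑ i : Fin d,
        ‖fderiv ℝ φ x (EuclideanSpace.single i 1)
          + ((σ * x i / ‖x‖ ^ 2 : ℝ) : ℂ) * φ x‖ ^ 2)
    ∧ 0 ≤ ∫ x, ((∑ i : Fin d, ‖fderiv ℝ φ x (EuclideanSpace.single i 1)‖ ^ 2)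
        + (a / ‖x‖ ^ 2) * ‖φ x‖ ^ 2) := by
  have ha' : a = σ ^ 2 - σ * ((d : ℝ) - 2) := by
    have hs := Real.sq_sqrt (show (0 : ℝ) ≤ ((d : ℝ) - 2) ^ 2 + 4 * a by nlinarith)
    rw [hσ]
    nlinarith
  let F : Fin d → EuclideanSpace ℝ (Fin d) → ℝ :=
    fun i y => y i * (‖y‖ ^ 2)⁻¹ * ‖φ y‖ ^ 2
  have hFc : ∀ i, HasCompactSupport (F i) := by
    intro i
    refine hφc.mono ?_
    intro y hy hy0
    exact hy (by simp [F, hy0])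
  have hF := fun i => aux_int (F i) (aux_smooth φ hφ hφ0 i) (hFc i) (EuclideanSpace.single i 1)
  let H : EuclideanSpace ℝ (Fin d) → ℝ :=
    fun x => σ * ∑ i, fderiv ℝ (F i) x (EuclideanSpace.single i 1)
  have hHi : Integrable H := (integrable_finsetSum _ (fun i _ => (hF i).1)).const_mul σ
  have hH0 : ∫ x, H x = 0 := by
    simp only [H]
    rw [integral_const_mul, integral_finsetSum _ (fun i _ => (hF i).1)]
    simp [(hF _).2]
  have key : ∀ x, (∑ i : Fin d,
        ‖fderiv ℝ φ x (EuclideanSpace.single i 1)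
          + ((σ * x i / ‖x‖ ^ 2 : ℝ) : ℂ) * φ x‖ ^ 2)
      = ((∑ i : Fin d, ‖fderiv ℝ φ x (EuclideanSpace.single i 1)‖ ^ 2)
        + (a / ‖x‖ ^ 2) * ‖φ x‖ ^ 2) + H x := by
    intro x
    by_cases hx : x = 0
    · subst hx
      have h := notMem_tsupport_iff_eventuallyEq.mp hφ0
      have hz : φ 0 = 0 := h.eq_of_nhds
      have hFz : ∀ i, fderiv ℝ (F i) 0 = 0 := by
        intro i
        have : F i =ᶠ[nhds 0] fun _ => (0 : ℝ) := by
          filter_upwards [h] with y hy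
          simp [F, hy]
        rw [this.fderiv_eq]
        simp
      simp [H, hz, hFz]
    · have hn : ‖x‖ ^ 2 ≠ 0 := by simpa using hx
      have hsum : ∑ i, x i ^ 2 = ‖x‖ ^ 2 := by
        rw [EuclideanSpace.norm_sq_eq]
        simp
      have hd : ∀ i, fderiv ℝ (F i) x (EuclideanSpace.single i 1) = _ :=
        fun i => aux_deriv φ x hx (hφ.differentiable (by simp)).differentiableAt i
      have hexp : ∀ i, ‖fderiv ℝ φ x (EuclideanSpace.single i 1)
          + ((σ * x i / ‖x‖ ^ 2 : ℝ) : ℂ) * φ x‖ ^ 2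
          = ‖fderiv ℝ φ x (EuclideanSpace.single i 1)‖ ^ 2
            + σ * (x i * (‖x‖ ^ 2)⁻¹
              * (2 * inner ℝ (φ x) (fderiv ℝ φ x (EuclideanSpace.single i 1))))
            + x i ^ 2 * (σ ^ 2 * ((‖x‖ ^ 2)⁻¹) ^ 2 * ‖φ x‖ ^ 2) := by
        intro i
        rw [← Complex.real_smul, norm_add_sq_real, norm_smul, inner_smul_right, mul_pow,
          Real.norm_eq_abs, sq_abs, real_inner_comm]
        ring
      have hD : ∑ i, fderiv ℝ (F i) x (EuclideanSpace.single i 1)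
          = d * ((‖x‖ ^ 2)⁻¹ * ‖φ x‖ ^ 2)
            - (∑ i, x i ^ 2) * (2 * ((‖x‖ ^ 2)⁻¹) ^ 2 * ‖φ x‖ ^ 2)
            + ∑ i, x i * (‖x‖ ^ 2)⁻¹
              * (2 * inner ℝ (φ x) (fderiv ℝ φ x (EuclideanSpace.single i 1))) := by
        simp only [hd]
        rw [Finset.sum_add_distrib, ← Finset.sum_mul, Finset.sum_sub_distrib, ← Finset.sum_mul,
          ← Finset.mul_sum]
        simp
        ring
      simp only [H, hexp, hD]
      rw [Finset.sum_add_distrib, Finset.sum_add_distrib, ← Finset.sum_mul, ← Finset.mul_sum,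
        hsum, ha']
      generalize (∑ i, x i * (‖x‖ ^ 2)⁻¹
        * (2 * inner ℝ (φ x) (fderiv ℝ φ x (EuclideanSpace.single i 1)))) = S
      field_simp
      ring
  have main : (∫ x, ((∑ i : Fin d, ‖fderiv ℝ φ x (EuclideanSpace.single i 1)‖ ^ 2)
        + (a / ‖x‖ ^ 2) * ‖φ x‖ ^ 2) =
      ∫ x, ∑ i : Fin d,
        ‖fderiv ℝ φ x (EuclideanSpace.single i 1)
          + ((σ * x i / ‖x‖ ^ 2 : ℝ) : ℂ) * φ x‖ ^ 2) := by
    simp_rw [key]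
    by_cases hg : Integrable (fun x => (∑ i : Fin d, ‖fderiv ℝ φ x (EuclideanSpace.single i 1)‖ ^ 2)
        + (a / ‖x‖ ^ 2) * ‖φ x‖ ^ 2)
    · rw [integral_add hg hHi, hH0, add_zero]
    · rw [integral_undef hg, integral_undef]
      intro h
      refine hg ((h.sub hHi).congr (Filter.Eventually.of_forall fun x => ?_))
      simp only [Pi.sub_apply, add_sub_cancel_right]
  refine ⟨main, ?_⟩
  rw [main]
  exact integral_nonneg fun x => Finset.sum_nonneg fun i _ => by positivity
end

section
/- Let $d \ge 3$, let $\sigma \le \tfrac{d-2}{2}$ be real, let $0 < s < d$ with $d - s - 2\sigma > 0$, and let $c > 0$. Then there exist constants $0 < C_1 \le C_2$ depending only on $d, s, \sigma, c$ such that for all $x, y \in \mathbb{R}^d \setminus \{0\}$ with $0 < |x| \le |y|$ and $x \ne y$: $C_1 \le \dfrac{\int_0^\infty \tau^{\frac{s-d}{2}} e^{-c|x-y|^2/\tau} \left(\max\left(\tfrac{\sqrt{\tau}}{|x|},1\right)\right)^{\sigma} \left(\max\left(\tfrac{\sqrt{\tau}}{|y|},1\right)\right)^{\sigma} \tfrac{d\tau}{\tau}}{|x-y|^{s-d}\left(\min\left(\tfrac{|x|}{|x-y|},1\right)\right)^{-\sigma}}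 \le C_2$. -/
open MeasureTheory

lemma rk_int (q c : ℝ) (hq : q < 0) (hc : 0 < c) :
    IntegrableOn (fun t : ℝ => t ^ q * Real.exp (-c / t) / t) (Set.Ioi 0) := by
  have h1 : IntegrableOn (fun u : ℝ => u ^ (-q-1) * Real.exp (-c * u ^ (1:ℝ))) (Set.Ioi 0) :=
    integrableOn_rpow_mul_exp_neg_mul_rpow (by linarith) (by norm_num) hc
  rw [← integrableOn_Ioi_comp_rpow_iff' _ (p := -1) (by norm_num)] at h1
  refine h1.congr_fun ?_ measurableSet_Ioi
  intro t ht
  have ht : 0 < t := ht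
  simp only [smul_eq_mul, Real.rpow_one]
  rw [← Real.rpow_mul ht.le, Real.rpow_neg_one, ← mul_assoc, ← Real.rpow_add ht, ← div_eq_mul_inv]
  rw [show (-1 - 1 + -1 * (-q-1) : ℝ) = q - 1 by ring, Real.rpow_sub_one ht.ne']
  ring

/-- the rescaled weight -/
noncomputable def rkG (a b t : ℝ) : ℝ :=
  min a 1 * (max (Real.sqrt t / a) 1 * max (Real.sqrt t / b) 1)

lemma rk_lo (a b t : ℝ) (ha : 0 < a) : min (Real.sqrt t) 1 ≤ rkG a b t := by
  have h0 := Real.sqrt_nonneg t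
  have h1 : min (Real.sqrt t) 1 ≤ min a 1 * max (Real.sqrt t / a) 1 := by
    rcases le_total a 1 with h | h
    · rw [min_eq_left h]
      refine (min_le_left _ _).trans ?_
      calc Real.sqrt t = a * (Real.sqrt t / a) := by field_simp
        _ ≤ _ := by gcongr; exact le_max_left _ _
    · rw [min_eq_right h, one_mul]
      exact (min_le_right _ _).trans (le_max_right _ _)
  have h2 : 0 ≤ min (Real.sqrt t) 1 := le_min h0 zero_le_one
  unfold rkG
  rw [← mul_assoc]
  nlinarith [le_max_right (Real.sqrt t / b) 1]

lemma rk_hi (a b t : ℝ) (ht : 0 ≤ t) (ha : 0 < a) (hb : 1/2 ≤ b) :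
    rkG a b t ≤ 2 * max t 1 := by
  have h0 := Real.sqrt_nonneg t
  have hM : 1 ≤ max (Real.sqrt t) 1 := le_max_right _ _
  have hM' : Real.sqrt t ≤ max (Real.sqrt t) 1 := le_max_left _ _
  have h1 : min a 1 * max (Real.sqrt t / a) 1 ≤ max (Real.sqrt t) 1 := by
    rcases le_total a 1 with h | h
    · rw [min_eq_left h, mul_max_of_nonneg _ _ ha.le, mul_one]
      rw [mul_div_cancel₀ _ ha.ne']
      exact max_le_max le_rfl h
    · rw [min_eq_right h, one_mul]
      exact max_le_max (div_le_self h0 h) le_rfl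
  have h2 : max (Real.sqrt t / b) 1 ≤ 2 * max (Real.sqrt t) 1 := by
    apply max_le
    · rw [div_le_iff₀ (by linarith)]; nlinarith
    · linarith
  have h3 : max (Real.sqrt t) 1 * max (Real.sqrt t) 1 = max t 1 := by
    rcases le_total t 1 with h | h
    · rw [max_eq_right h, max_eq_right (Real.sqrt_le_one.mpr h)]; norm_num
    · rw [max_eq_left h, max_eq_left (Real.one_le_sqrt.mpr h), Real.mul_self_sqrt ht]
  unfold rkG
  rw [← mul_assoc]
  calc _ ≤ max (Real.sqrt t) 1 * (2 * max (Real.sqrt t) 1) := by gcongr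
    _ = 2 * (max (Real.sqrt t) 1 * max (Real.sqrt t) 1) := by ring
    _ = _ := by rw [h3]

lemma rk_pow_hi (σ a b t : ℝ) (ht : 0 < t) (ha : 0 < a) (hb : 1/2 ≤ b) :
    rkG a b t ^ σ ≤ 2 ^ |σ| * (1 + t ^ σ + t ^ (σ/2)) := by
  have hp1 : 0 < t ^ σ := Real.rpow_pos_of_pos ht _
  have hp2 : 0 < t ^ (σ/2) := Real.rpow_pos_of_pos ht _
  have h0 := Real.sqrt_pos.mpr ht
  have hl := rk_lo a b t ha
  have hm : 0 < min (Real.sqrt t) 1 := lt_min h0 one_pos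
  have h2 : (1:ℝ) ≤ 2 ^ |σ| := Real.one_le_rpow (by norm_num) (abs_nonneg _)
  rcases le_total 0 σ with h | h
  · calc rkG a b t ^ σ ≤ (2 * max t 1) ^ σ :=
          Real.rpow_le_rpow (hm.le.trans hl) (rk_hi a b t ht.le ha hb) h
      _ = 2 ^ |σ| * (max t 1) ^ σ := by
          rw [Real.mul_rpow (by norm_num) (by positivity), abs_of_nonneg h]
      _ ≤ _ := by
          gcongr
          rcases le_total t 1 with h | h
          · rw [max_eq_right h, Real.one_rpow]; linarith
          · rw [max_eq_left h]; linarith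
  · calc rkG a b t ^ σ ≤ (min (Real.sqrt t) 1) ^ σ := Real.rpow_le_rpow_of_nonpos hm hl h
      _ ≤ 1 + t ^ σ + t ^ (σ/2) := by
          rcases le_total (Real.sqrt t) 1 with h | h
          · rw [min_eq_left h, Real.sqrt_eq_rpow, ← Real.rpow_mul ht.le,
              show 1/2*σ = σ/2 by ring]; linarith
          · rw [min_eq_right h, Real.one_rpow]; linarith
      _ ≤ _ := le_mul_of_one_le_left (by positivity) h2

lemma rk_pow_lo (σ a b t : ℝ) (ht : 1 ≤ t) (ht2 : t ≤ 2) (ha : 0 < a) (hb : 1/2 ≤ b) :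
    min 1 (4 ^ σ) ≤ rkG a b t ^ σ := by
  have hl := rk_lo a b t ha
  rw [min_eq_right (Real.one_le_sqrt.mpr ht)] at hl
  have hh := rk_hi a b t (by linarith) ha hb
  rw [max_eq_left ht] at hh
  rcases le_total 0 σ with h | h
  · exact (min_le_left _ _).trans (Real.one_le_rpow hl h)
  · exact (min_le_right _ _).trans
      (Real.rpow_le_rpow_of_nonpos (by linarith) (by linarith) h)

lemma rk_main (q σ c : ℝ) (hq : q < 0) (hqσ : q + σ < 0) (hc : 0 < c) :
    ∃ C₁ C₂ : ℝ, 0 < C₁ ∧ C₁ ≤ C₂ ∧ ∀ a b : ℝ, 0 < a → 1/2 ≤ b →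
      C₁ ≤ (∫ t in Set.Ioi (0:ℝ), t ^ q * Real.exp (-c / t) / t * rkG a b t ^ σ) ∧
      (∫ t in Set.Ioi (0:ℝ), t ^ q * Real.exp (-c / t) / t * rkG a b t ^ σ) ≤ C₂ := by
  set H : ℝ → ℝ := fun t => 2 ^ |σ| * (t ^ q * Real.exp (-c / t) / t
    + t ^ (q+σ) * Real.exp (-c / t) / t + t ^ (q+σ/2) * Real.exp (-c / t) / t) with hH
  have hHi : IntegrableOn H (Set.Ioi 0) :=
    (((rk_int q c hq hc).add (rk_int (q+σ) c hqσ hc)).add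
      (rk_int (q+σ/2) c (by linarith) hc)).const_mul _
  set C : ℝ := 2 ^ q * Real.exp (-c) / 2 * min 1 (4 ^ σ) with hC
  have hCpos : 0 < C := by
    have : 0 < min (1:ℝ) (4 ^ σ) := lt_min one_pos (by positivity)
    positivity
  have key : ∀ a b : ℝ, 0 < a → 1/2 ≤ b →
      C ≤ (∫ t in Set.Ioi (0:ℝ), t ^ q * Real.exp (-c / t) / t * rkG a b t ^ σ) ∧
      (∫ t in Set.Ioi (0:ℝ), t ^ q * Real.exp (-c / t) / t * rkG a b t ^ σ)
        ≤ ∫ t in Set.Ioi (0:ℝ), H t := by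
    intro a b ha hb
    have hGpos : ∀ t, 0 < t → 0 < rkG a b t := fun t ht =>
      (lt_min (Real.sqrt_pos.mpr ht) one_pos).trans_le (rk_lo a b t ha)
    have hKnn : ∀ t, 0 < t → 0 ≤ t ^ q * Real.exp (-c / t) / t * rkG a b t ^ σ := by
      intro t ht
      have := hGpos t ht
      positivity
    have hKH : ∀ t, 0 < t → t ^ q * Real.exp (-c / t) / t * rkG a b t ^ σ ≤ H t := by
      intro t ht
      calc _ ≤ t ^ q * Real.exp (-c / t) / t * (2 ^ |σ| * (1 + t ^ σ + t ^ (σ/2))) := by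
            gcongr
            exact rk_pow_hi σ a b t ht ha hb
        _ = H t := by
            simp only [hH]
            rw [Real.rpow_add ht, Real.rpow_add ht]; ring
    have hKi : IntegrableOn (fun t => t ^ q * Real.exp (-c / t) / t * rkG a b t ^ σ)
        (Set.Ioi 0) := by
      refine Integrable.mono' hHi ?_ ?_
      · apply Measurable.aestronglyMeasurable
        unfold rkG
        fun_prop
      · filter_upwards [self_mem_ae_restrict measurableSet_Ioi] with t ht
        rw [Real.norm_of_nonneg (hKnn t ht)]
        exact hKH t ht
    refine ⟨?_, setIntegral_mono_on hKi hHi measurableSet_Ioi (fun t ht => hKH t ht)⟩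
    have hsub : Set.Icc (1:ℝ) 2 ⊆ Set.Ioi 0 := fun t ht => lt_of_lt_of_le one_pos ht.1
    calc C = ∫ t in Set.Icc (1:ℝ) 2, C := by
          rw [setIntegral_const]; norm_num
      _ ≤ ∫ t in Set.Icc (1:ℝ) 2, t ^ q * Real.exp (-c / t) / t * rkG a b t ^ σ := by
          refine setIntegral_mono_on (by simp) (hKi.mono_set hsub) measurableSet_Icc ?_
          intro t ht
          have ht0 : 0 < t := hsub ht
          have e1 : (2:ℝ) ^ q ≤ t ^ q := Real.rpow_le_rpow_of_nonpos ht0 ht.2 hq.le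
          have e2 : Real.exp (-c) ≤ Real.exp (-c / t) := by
            apply Real.exp_le_exp.mpr
            rw [le_div_iff₀ ht0]; nlinarith [ht.1]
          have e3 := rk_pow_lo σ a b t ht.1 ht.2 ha hb
          have e4 : 0 ≤ min (1:ℝ) (4 ^ σ) := le_min zero_le_one (by positivity)
          have e5 := ht.2
          simp only [hC]
          gcongr
      _ ≤ _ := by
          refine setIntegral_mono_set hKi ?_ (Filter.Eventually.of_forall hsub)
          filter_upwards [self_mem_ae_restrict measurableSet_Ioi] with t ht
          exact hKnn t ht
  refine ⟨C, ∫ t in Set.Ioi (0:ℝ), H t, hCpos, ?_, key⟩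
  exact (key 1 1 one_pos (by norm_num)).1.trans (key 1 1 one_pos (by norm_num)).2

lemma rk_scale (p σ c r X Y : ℝ) (hr : 0 < r) (hX : 0 < X) (hY : 0 < Y) :
    (∫ τ in Set.Ioi (0 : ℝ), τ ^ (p / 2) * Real.exp (-c * r ^ 2 / τ)
        * (max (Real.sqrt τ / X) 1) ^ σ * (max (Real.sqrt τ / Y) 1) ^ σ / τ)
      / (r ^ p * (min (X / r) 1) ^ (-σ)) =
    ∫ t in Set.Ioi (0:ℝ), t ^ (p/2) * Real.exp (-c / t) / t * rkG (X/r) (Y/r) t ^ σ := by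
  have hr2 : 0 < r ^ 2 := by positivity
  have h := integral_comp_mul_left_Ioi (fun τ : ℝ => τ ^ (p / 2) * Real.exp (-c * r ^ 2 / τ)
        * (max (Real.sqrt τ / X) 1) ^ σ * (max (Real.sqrt τ / Y) 1) ^ σ / τ) 0 hr2
  rw [mul_zero, smul_eq_mul, inv_mul_eq_div, eq_div_iff hr2.ne'] at h
  rw [← h, div_eq_mul_inv, mul_assoc, ← integral_mul_const]
  refine setIntegral_congr_fun measurableSet_Ioi ?_
  intro t ht
  have ht : 0 < t := ht
  have hm : 0 < min (X / r) 1 := lt_min (by positivity) one_pos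
  have hs : Real.sqrt (r^2 * t) = r * Real.sqrt t := by
    rw [Real.sqrt_mul hr2.le, Real.sqrt_sq hr.le]
  have hpw : (r^2*t) ^ (p/2) = r ^ p * t ^ (p/2) := by
    rw [Real.mul_rpow hr2.le ht.le, ← Real.rpow_natCast, ← Real.rpow_mul hr.le]
    congr 2; push_cast; ring
  have he : -c * r^2 / (r^2*t) = -c / t := by field_simp
  have hx : r * Real.sqrt t / X = Real.sqrt t / (X / r) := by field_simp
  have hy : r * Real.sqrt t / Y = Real.sqrt t / (Y / r) := by field_simp
  have hrp : 0 < r ^ p := Real.rpow_pos_of_pos hr _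
  have hmp : 0 < min (X / r) 1 ^ σ := Real.rpow_pos_of_pos hm _
  simp only [hs, hpw, he, hx, hy, rkG]
  rw [Real.mul_rpow hm.le (by positivity), Real.mul_rpow (by positivity) (by positivity),
    Real.rpow_neg hm.le]
  field_simp

/-- Two-sided bound for the time-integral of the heat kernel bounds: for `d ≥ 3`,
`σ ≤ (d-2)/2`, `0 < s < d` with `d - s - 2σ > 0` and `c > 0`, there are constants
`0 < C₁ ≤ C₂` such that for all nonzero `x, y` with `|x| ≤ |y|`, `x ≠ y`,
the ratio of `∫₀^∞ τ^{(s-d)/2} e^{-c|x-y|²/τ} (max(√τ/|x|,1))^σ (max(√τ/|y|,1))^σ dτ/τ`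
to `|x-y|^{s-d} (min(|x|/|x-y|,1))^{-σ}` lies in `[C₁, C₂]`. -/
theorem riesz_kernel_two_sided (d : ℕ) (hd : 3 ≤ d) (s σ c : ℝ)
    (hσ : σ ≤ ((d : ℝ) - 2) / 2) (hs0 : 0 < s) (hsd : s < d)
    (hds : 0 < (d : ℝ) - s - 2 * σ) (hc : 0 < c) :
    ∃ C₁ C₂ : ℝ, 0 < C₁ ∧ C₁ ≤ C₂ ∧
      ∀ x y : EuclideanSpace ℝ (Fin d), x ≠ 0 → ‖x‖ ≤ ‖y‖ → x ≠ y →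
        (C₁ ≤ (∫ τ in Set.Ioi (0 : ℝ),
                τ ^ ((s - (d : ℝ)) / 2) * Real.exp (-c * ‖x - y‖ ^ 2 / τ)
                  * (max (Real.sqrt τ / ‖x‖) 1) ^ σ
                  * (max (Real.sqrt τ / ‖y‖) 1) ^ σ / τ)
            / (‖x - y‖ ^ (s - (d : ℝ)) * (min (‖x‖ / ‖x - y‖) 1) ^ (-σ))) ∧
        ((∫ τ in Set.Ioi (0 : ℝ),
                τ ^ ((s - (d : ℝ)) / 2) * Real.exp (-c * ‖x - y‖ ^ 2 / τ)
                  * (max (Real.sqrt τ / ‖x‖) 1) ^ σ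
                  * (max (Real.sqrt τ / ‖y‖) 1) ^ σ / τ)
            / (‖x - y‖ ^ (s - (d : ℝ)) * (min (‖x‖ / ‖x - y‖) 1) ^ (-σ)) ≤ C₂) := by
  obtain ⟨C₁, C₂, h1, h2, h⟩ := rk_main ((s - d) / 2) σ c (by linarith) (by linarith) hc
  refine ⟨C₁, C₂, h1, h2, ?_⟩
  intro x y hx hxy hne
  have hX : 0 < ‖x‖ := norm_pos_iff.mpr hx
  have hr : 0 < ‖x - y‖ := norm_pos_iff.mpr (sub_ne_zero.mpr hne)
  have hY : 0 < ‖y‖ := hX.trans_le hxy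
  rw [rk_scale (s - d) σ c _ _ _ hr hX hY]
  refine h _ _ (div_pos hX hr) ?_
  rw [le_div_iff₀ hr]
  linarith [norm_sub_le x y]
end

section
/- Let $d \ge 3$. There is a constant $C$ depending only on $d$ such that for all $t > 0$ and all $x, y \in \mathbb{R}^d$ with $|x| \ge \sqrt{t}$ and $|y| \ge \sqrt{t}$: $\int_0^t \int_{\mathbb{R}^d} (t-s)^{-\frac{d}{2}} e^{-\frac{|x-z|^2}{4(t-s)}}\, \frac{1}{|z|^2}\, s^{-\frac{d}{2}} e^{-\frac{|z-y|^2}{4s}}\,dz\,ds \le C\, t^{-\frac{d}{2}} e^{-\frac{|x-y|^2}{16 t}}\, \frac{t}{(|x|+|y|)^2}$. -/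
open MeasureTheory

lemma aux_region1 {X Y Z a b τ s t : ℝ} (hX : 0 < X) (hY : 0 < Y) (hτ : 0 < τ) (hs : 0 < s)
    (ht : τ + s = t) (hZ : 0 < Z) (hZt : t ≤ 4 * Z ^ 2)
    (h1 : X ≤ Z + a) (h2 : Y ≤ Z + b) :
    Real.exp (-a ^ 2 / (4 * τ)) * (1 / Z ^ 2) * Real.exp (-b ^ 2 / (4 * s)) ≤
      96 * (1 / (X + Y) ^ 2) * Real.exp (-(a ^ 2 / τ + b ^ 2 / s) / 8) := by
  obtain ⟨A, hA⟩ : ∃ A, A = a ^ 2 / τ := ⟨_, rfl⟩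
  obtain ⟨B, hB⟩ : ∃ B, B = b ^ 2 / s := ⟨_, rfl⟩
  have hA0 : 0 ≤ A := by rw [hA]; positivity
  have hB0 : 0 ≤ B := by rw [hB]; positivity
  have ha2 : a ^ 2 = A * τ := by rw [hA]; field_simp
  have hb2 : b ^ 2 = B * s := by rw [hB]; field_simp
  have e1 : -a ^ 2 / (4 * τ) = -A / 4 := by rw [hA]; field_simp
  have e2 : -b ^ 2 / (4 * s) = -B / 4 := by rw [hB]; field_simp
  rw [e1, e2, ← hA, ← hB]
  have key : (X + Y) ^ 2 ≤ 12 * Z ^ 2 * (1 + A + B) := by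
    have : (X + Y) ^ 2 ≤ (2 * Z + a + b) ^ 2 := by
      apply pow_le_pow_left₀ (by positivity); linarith
    have h3 : (2 * Z + a + b) ^ 2 ≤ 3 * (4 * Z ^ 2 + a ^ 2 + b ^ 2) := by
      nlinarith [sq_nonneg (2 * Z - a), sq_nonneg (2 * Z - b), sq_nonneg (a - b)]
    have h4 : A * τ ≤ A * (4 * Z ^ 2) := by apply mul_le_mul_of_nonneg_left _ hA0; linarith
    have h5 : B * s ≤ B * (4 * Z ^ 2) := by apply mul_le_mul_of_nonneg_left _ hB0; linarith
    nlinarith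
  have hexp : 1 + A + B ≤ 8 * Real.exp ((A + B) / 8) := by
    have := Real.add_one_le_exp ((A + B) / 8); linarith
  have k2 : 1 / Z ^ 2 ≤ 96 * (1 / (X + Y) ^ 2) * Real.exp ((A + B) / 8) := by
    rw [mul_one_div, div_mul_eq_mul_div, div_le_div_iff₀ (by positivity) (by positivity)]
    nlinarith [mul_le_mul_of_nonneg_left hexp (by positivity : 0 ≤ 12 * Z ^ 2)]
  calc _ = Real.exp (-A / 4) * Real.exp (-B / 4) * (1 / Z ^ 2) := by ring
    _ ≤ Real.exp (-A / 4) * Real.exp (-B / 4) * (96 * (1 / (X + Y) ^ 2) * Real.exp ((A + B) / 8)) := by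
      gcongr
    _ = 96 * (1 / (X + Y) ^ 2) * (Real.exp (-A / 4) * Real.exp (-B / 4) * Real.exp ((A + B) / 8)) := by ring
    _ = _ := by rw [← Real.exp_add, ← Real.exp_add]; ring_nf

lemma aux_pow (d : ℕ) {τ t A : ℝ} (hτ : 0 < τ) (hτt : τ ≤ t) (hA : t / (4 * τ) ≤ A) :
    τ ^ (-(d : ℝ) / 2) * Real.exp (-A / 8) ≤ (d.factorial * 32 ^ d) * t ^ (-(d : ℝ) / 2) := by
  have ht : 0 < t := by linarith
  set u := t / τ with hu
  have hu1 : 1 ≤ u := by rw [hu, le_div_iff₀ hτ]; linarith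
  have e : τ ^ (-(d : ℝ) / 2) = t ^ (-(d : ℝ) / 2) * u ^ ((d : ℝ) / 2) := by
    rw [hu, Real.div_rpow ht.le hτ.le, neg_div, Real.rpow_neg hτ.le, Real.rpow_neg ht.le]
    field_simp
  have h1 : u ^ ((d : ℝ) / 2) ≤ u ^ d := by
    rw [← Real.rpow_natCast]
    apply Real.rpow_le_rpow_of_exponent_le hu1
    have : (0 : ℝ) ≤ d := by positivity
    linarith
  have h2 := Real.pow_div_factorial_le_exp (u / 32) (by positivity) d
  have h3 : u ^ d ≤ (d.factorial * 32 ^ d) * Real.exp (u / 32) := by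
    rw [div_pow, div_div, div_le_iff₀ (by positivity)] at h2
    linarith
  have h4 : Real.exp (-A / 8) ≤ Real.exp (-(u / 32)) := by
    apply Real.exp_le_exp.2
    have : t / (4 * τ) = u / 4 := by rw [hu]; field_simp
    linarith
  calc _ ≤ (t ^ (-(d : ℝ) / 2) * ((d.factorial * 32 ^ d) * Real.exp (u / 32))) * Real.exp (-(u / 32)) := by
        rw [e]; gcongr; exact h1.trans h3
    _ = (d.factorial * 32 ^ d) * t ^ (-(d : ℝ) / 2) * (Real.exp (u / 32) * Real.exp (-(u / 32))) := by ring
    _ = _ := by rw [← Real.exp_add]; simp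

lemma aux_region2 (d : ℕ) {X Y Z a b D τ s t : ℝ} (hX : 0 < X) (hY : 0 < Y) (hτ : 0 < τ) (hs : 0 < s)
    (ht : τ + s = t) (hXt : t ≤ X ^ 2) (hYt : t ≤ Y ^ 2) (hD0 : 0 ≤ D) (hD : D ≤ a + b)
    (ha : X ≤ 2 * a) (hb : Y ≤ 2 * b) :
    τ ^ (-(d : ℝ) / 2) * Real.exp (-a ^ 2 / (4 * τ)) * (1 / Z ^ 2) * s ^ (-(d : ℝ) / 2) *
      Real.exp (-b ^ 2 / (4 * s)) ≤
      128 * t * (1 / (X + Y) ^ 2) * (d.factorial * 32 ^ d) ^ 2 * (t ^ (-(d : ℝ) / 2)) ^ 2 *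
        Real.exp (-D ^ 2 / (16 * t)) * (1 / Z ^ 2) := by
  have ht0 : 0 < t := by linarith
  obtain ⟨A, hA⟩ : ∃ A, A = a ^ 2 / τ := ⟨_, rfl⟩
  obtain ⟨B, hB⟩ : ∃ B, B = b ^ 2 / s := ⟨_, rfl⟩
  have hA0 : 0 ≤ A := by rw [hA]; positivity
  have hB0 : 0 ≤ B := by rw [hB]; positivity
  have ha2 : a ^ 2 = A * τ := by rw [hA]; field_simp
  have hb2 : b ^ 2 = B * s := by rw [hB]; field_simp
  have e1 : -a ^ 2 / (4 * τ) = -A / 4 := by rw [hA]; field_simp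
  have e2 : -b ^ 2 / (4 * s) = -B / 4 := by rw [hB]; field_simp
  have hXa : X ^ 2 ≤ 4 * a ^ 2 := by nlinarith
  have hYb : Y ^ 2 ≤ 4 * b ^ 2 := by nlinarith
  have p1 := aux_pow d (t := t) (A := A) hτ (by linarith)
    (by rw [hA, div_le_div_iff₀ (by positivity) hτ]; nlinarith)
  have p2 := aux_pow d (t := t) (A := B) hs (by linarith)
    (by rw [hB, div_le_div_iff₀ (by positivity) hs]; nlinarith)
  have hDAB : D ^ 2 / t ≤ A + B := by
    have h : D ^ 2 ≤ (a + b) ^ 2 := pow_le_pow_left₀ hD0 hD 2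
    refine (div_le_div_of_nonneg_right h ht0.le).trans ?_
    rw [hA, hB, div_add_div _ _ hτ.ne' hs.ne', div_le_div_iff₀ ht0 (by positivity), ← ht]
    nlinarith [sq_nonneg (a * s - τ * b)]
  have p3 : Real.exp (-(A + B) / 16) ≤ Real.exp (-D ^ 2 / (16 * t)) := by
    apply Real.exp_le_exp.2
    have : -D ^ 2 / (16 * t) = -(D ^ 2 / t) / 16 := by field_simp
    linarith
  have p4 : Real.exp (-(A + B) / 16) ≤ 128 * t * (1 / (X + Y) ^ 2) := by
    have h := Real.add_one_le_exp ((A + B) / 16)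
    have h1 : (X + Y) ^ 2 ≤ 8 * t * (A + B) := by
      nlinarith [sq_nonneg (X - Y), mul_nonneg hA0 hs.le, mul_nonneg hB0 hτ.le]
    have h2 : (X + Y) ^ 2 ≤ 128 * t * Real.exp ((A + B) / 16) := by
      have : 8 * t * (A + B) ≤ 8 * t * (16 * Real.exp ((A + B) / 16)) := by
        gcongr; linarith
      linarith
    rw [mul_one_div, le_div_iff₀ (by positivity), neg_div, Real.exp_neg, inv_mul_le_iff₀ (Real.exp_pos _)]
    linarith
  have es : Real.exp (-A / 4) * Real.exp (-B / 4) = Real.exp (-A / 8) * Real.exp (-B / 8) *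
      Real.exp (-(A + B) / 16) * Real.exp (-(A + B) / 16) := by
    simp only [← Real.exp_add]; ring_nf
  rw [e1, e2]
  calc _ = τ ^ (-(d : ℝ) / 2) * s ^ (-(d : ℝ) / 2) * (1 / Z ^ 2) * (Real.exp (-A / 4) * Real.exp (-B / 4)) := by ring
    _ = (τ ^ (-(d : ℝ) / 2) * Real.exp (-A / 8)) * (s ^ (-(d : ℝ) / 2) * Real.exp (-B / 8)) *
      Real.exp (-(A + B) / 16) * Real.exp (-(A + B) / 16) * (1 / Z ^ 2) := by rw [es]; ring
    _ ≤ ((d.factorial * 32 ^ d) * t ^ (-(d : ℝ) / 2)) * ((d.factorial * 32 ^ d) * t ^ (-(d : ℝ) / 2)) *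
      (128 * t * (1 / (X + Y) ^ 2)) * Real.exp (-D ^ 2 / (16 * t)) * (1 / Z ^ 2) := by gcongr
    _ = _ := by ring

lemma aux_gauss (d : ℕ) {b : ℝ} (hb : 0 < b) (m : EuclideanSpace ℝ (Fin d)) :
    ∫⁻ z, ENNReal.ofReal (Real.exp (-b * ‖z - m‖ ^ 2)) = ENNReal.ofReal ((Real.pi / b) ^ ((d : ℝ) / 2)) := by
  rw [lintegral_sub_right_eq_self (fun z : EuclideanSpace ℝ (Fin d) => ENNReal.ofReal (Real.exp (-b * ‖z‖ ^ 2))) m]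
  have h := GaussianFourier.integral_rexp_neg_mul_sq_norm (V := EuclideanSpace ℝ (Fin d)) hb
  rw [finrank_euclideanSpace_fin] at h
  rw [← ofReal_integral_eq_lintegral_ofReal, h]
  · by_contra hc
    rw [integral_undef hc] at h
    have : 0 < (Real.pi / b) ^ ((d : ℝ) / 2) := by positivity
    linarith
  · exact Filter.Eventually.of_forall fun z => (Real.exp_pos _).le

lemma aux_ident (d : ℕ) {τ s t : ℝ} (hτ : 0 < τ) (hs : 0 < s) (ht : τ + s = t)
    (x y z : EuclideanSpace ℝ (Fin d)) :
    ‖x - z‖ ^ 2 / τ + ‖z - y‖ ^ 2 / s = ‖x - y‖ ^ 2 / t +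
      t / (τ * s) * ‖z - ((s / t) • x + (τ / t) • y)‖ ^ 2 := by
  have ht0 : 0 < t := by linarith
  set p := z - ((s / t) • x + (τ / t) • y) with hp
  have hsum : τ / t = 1 - s / t := by rw [← ht]; field_simp; ring
  have h1 : x - z = (τ / t) • (x - y) - p := by rw [hp, hsum]; module
  have h2 : z - y = (s / t) • (x - y) + p := by rw [hp, hsum]; module
  rw [h1, h2, norm_sub_sq_real, norm_add_sq_real, norm_smul, norm_smul, inner_smul_left, inner_smul_left]
  simp only [Real.norm_eq_abs, mul_pow, sq_abs, RCLike.conj_to_real]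
  generalize ‖x - y‖ ^ 2 = D
  generalize ‖p‖ ^ 2 = P
  subst ht
  field_simp
  ring

lemma aux_ck (d : ℕ) {τ s t : ℝ} (hτ : 0 < τ) (hs : 0 < s) (ht : τ + s = t)
    (x y : EuclideanSpace ℝ (Fin d)) {K : ℝ} (hK : 0 ≤ K) :
    ∫⁻ z, ENNReal.ofReal (K * (τ ^ (-(d : ℝ) / 2) * s ^ (-(d : ℝ) / 2) *
      Real.exp (-(‖x - z‖ ^ 2 / τ + ‖z - y‖ ^ 2 / s) / 8))) ≤
    ENNReal.ofReal (K * ((8 * Real.pi) ^ ((d : ℝ) / 2) * t ^ (-(d : ℝ) / 2) *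
      Real.exp (-‖x - y‖ ^ 2 / (16 * t)))) := by
  have ht0 : 0 < t := by linarith
  have hb : 0 < t / (8 * τ * s) := by positivity
  set L := K * (τ ^ (-(d : ℝ) / 2) * s ^ (-(d : ℝ) / 2) * Real.exp (-‖x - y‖ ^ 2 / (8 * t))) with hL
  have hL0 : 0 ≤ L := by positivity
  have e : ∀ z, K * (τ ^ (-(d : ℝ) / 2) * s ^ (-(d : ℝ) / 2) *
      Real.exp (-(‖x - z‖ ^ 2 / τ + ‖z - y‖ ^ 2 / s) / 8)) =
      L * Real.exp (-(t / (8 * τ * s)) * ‖z - ((s / t) • x + (τ / t) • y)‖ ^ 2) := by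
    intro z
    have : -(‖x - z‖ ^ 2 / τ + ‖z - y‖ ^ 2 / s) / 8 = -‖x - y‖ ^ 2 / (8 * t) +
        -(t / (8 * τ * s)) * ‖z - ((s / t) • x + (τ / t) • y)‖ ^ 2 := by
      rw [aux_ident d hτ hs ht]
      field_simp
      ring
    rw [this, Real.exp_add, hL]; ring
  simp_rw [e, ENNReal.ofReal_mul hL0]
  rw [lintegral_const_mul _ (by fun_prop), aux_gauss d hb, ← ENNReal.ofReal_mul hL0]
  apply ENNReal.ofReal_le_ofReal
  have e3 : Real.pi / (t / (8 * τ * s)) = (8 * Real.pi) * τ * s / t := by field_simp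
  rw [e3, Real.div_rpow (by positivity) ht0.le, Real.mul_rpow (by positivity) hs.le,
    Real.mul_rpow (by positivity) hτ.le, hL, neg_div, Real.rpow_neg hτ.le, Real.rpow_neg hs.le,
    Real.rpow_neg ht0.le]
  have h1 : 0 < τ ^ ((d : ℝ) / 2) := by positivity
  have h2 : 0 < s ^ ((d : ℝ) / 2) := by positivity
  have h3 : 0 < t ^ ((d : ℝ) / 2) := by positivity
  have h4 : Real.exp (-‖x - y‖ ^ 2 / (8 * t)) ≤ Real.exp (-‖x - y‖ ^ 2 / (16 * t)) := by
    apply Real.exp_le_exp.2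
    rw [neg_div, neg_div, neg_le_neg_iff]
    gcongr; norm_num
  calc _ = K * ((8 * Real.pi) ^ ((d : ℝ) / 2) * (t ^ ((d : ℝ) / 2))⁻¹ * Real.exp (-‖x - y‖ ^ 2 / (8 * t))) := by
        field_simp
    _ ≤ _ := by gcongr

lemma aux_ball (d : ℕ) (hd : 3 ≤ d) : ∃ V : ℝ, 0 ≤ V ∧ ∀ r : ℝ, 0 < r →
    ∫⁻ z : EuclideanSpace ℝ (Fin d),
      ENNReal.ofReal ((Set.Iio r).indicator (fun u => 1 / u ^ 2) ‖z‖) ≤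
      ENNReal.ofReal (V * r ^ (d - 2)) := by
  refine ⟨d * (volume : Measure (EuclideanSpace ℝ (Fin d))).real (Metric.ball 0 1),
    by positivity, fun r hr => ?_⟩
  haveI : Nontrivial (EuclideanSpace ℝ (Fin d)) := by
    apply Module.nontrivial_of_finrank_pos (R := ℝ)
    rw [finrank_euclideanSpace_fin]; omega
  set g : ℝ → ℝ := (Set.Iio r).indicator (fun u => 1 / u ^ 2) with hg
  have hg0 : ∀ u, 0 ≤ g u := fun u => Set.indicator_nonneg (fun u _ => by positivity) u
  have hEq : Set.EqOn (fun y : ℝ => y ^ (d - 1) • g y)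
      ((Set.Iio r).indicator (fun y => y ^ (d - 3))) (Set.Ioi 0) := by
    intro y hy
    have hy0 : (0 : ℝ) < y := hy
    by_cases h : y < r
    · simp only [hg, smul_eq_mul, Set.indicator_of_mem (show y ∈ Set.Iio r from h)]
      rw [show d - 1 = (d - 3) + 2 by omega, pow_add]
      field_simp
    · simp [hg, h]
  have hset : Set.Ioi (0 : ℝ) ∩ Set.Iio r = Set.Ioo 0 r := Set.Ioi_inter_Iio
  have hioo : IntegrableOn (fun y : ℝ => y ^ (d - 3)) (Set.Ioo 0 r) :=
    ((continuous_pow (d - 3)).integrableOn_Icc (a := 0) (b := r)).mono_set Set.Ioo_subset_Icc_self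
  have hint : IntegrableOn (fun y : ℝ => y ^ (d - 1) • g y) (Set.Ioi 0) := by
    rw [integrableOn_congr_fun hEq measurableSet_Ioi]
    rw [IntegrableOn, integrable_indicator_iff measurableSet_Iio, IntegrableOn,
      Measure.restrict_restrict measurableSet_Iio, Set.inter_comm, hset]
    exact hioo
  have hI : Integrable (fun z : EuclideanSpace ℝ (Fin d) => g ‖z‖) := by
    rw [integrable_fun_norm_addHaar, finrank_euclideanSpace_fin]
    exact hint
  rw [← ofReal_integral_eq_lintegral_ofReal hI (Filter.Eventually.of_forall fun z => hg0 _)]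
  apply ENNReal.ofReal_le_ofReal
  rw [integral_fun_norm_addHaar, finrank_euclideanSpace_fin, setIntegral_congr_fun measurableSet_Ioi hEq,
    setIntegral_indicator measurableSet_Iio, hset, nsmul_eq_mul, smul_eq_mul, mul_assoc]
  have hb : ∫ y in Set.Ioo 0 r, y ^ (d - 3) ≤ r ^ (d - 2) := by
    calc _ ≤ ∫ y in Set.Ioo 0 r, r ^ (d - 3) := by
          apply setIntegral_mono_on hioo (integrableOn_const (by simp)) measurableSet_Ioo
          intro y hy
          exact pow_le_pow_left₀ hy.1.le hy.2.le _
      _ = r ^ (d - 2) := by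
          rw [setIntegral_const]
          simp only [Real.volume_real_Ioo_of_le hr.le, smul_eq_mul, sub_zero]
          rw [show d - 2 = (d - 3) + 1 by omega, pow_succ]; ring
  gcongr

/-- Duhamel bound for the difference of heat kernels: for `d ≥ 3` there is `C` such
that for `t > 0` and `|x|, |y| ≥ √t`,
`∫₀^t ∫ (t-s)^{-d/2} e^{-|x-z|²/(4(t-s))} |z|^{-2} s^{-d/2} e^{-|z-y|²/(4s)} dz ds
 ≤ C t^{-d/2} e^{-|x-y|²/(16t)} · t/(|x|+|y|)²`. -/
theorem duhamel_heat_difference (d : ℕ) (hd : 3 ≤ d) :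
    ∃ C : ℝ, 0 < C ∧ ∀ t : ℝ, 0 < t →
      ∀ x y : EuclideanSpace ℝ (Fin d), Real.sqrt t ≤ ‖x‖ → Real.sqrt t ≤ ‖y‖ →
      (∫⁻ s in Set.Ioo (0 : ℝ) t, ∫⁻ z, ENNReal.ofReal (
          (t - s) ^ (-(d : ℝ) / 2) * Real.exp (-‖x - z‖ ^ 2 / (4 * (t - s))) *
            (1 / ‖z‖ ^ 2) * s ^ (-(d : ℝ) / 2) * Real.exp (-‖z - y‖ ^ 2 / (4 * s)))) ≤
      ENNReal.ofReal (C * t ^ (-(d : ℝ) / 2) * Real.exp (-‖x - y‖ ^ 2 / (16 * t)) *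
        (t / (‖x‖ + ‖y‖) ^ 2)) := by
  obtain ⟨V, hV, hball⟩ := aux_ball d hd
  refine ⟨96 * (8 * Real.pi) ^ ((d : ℝ) / 2) + 128 * (d.factorial * 32 ^ d) ^ 2 * V,
    by positivity, ?_⟩
  intro t ht x y hx hy
  have hst : 0 < Real.sqrt t := Real.sqrt_pos.2 ht
  have hsq : Real.sqrt t ^ 2 = t := Real.sq_sqrt ht.le
  have hX : 0 < ‖x‖ := hst.trans_le hx
  have hY : 0 < ‖y‖ := hst.trans_le hy
  set M := 1 / (‖x‖ + ‖y‖) ^ 2 with hM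
  have hM0 : 0 ≤ M := by positivity
  set E := Real.exp (-‖x - y‖ ^ 2 / (16 * t)) with hE
  have hE0 : 0 < E := Real.exp_pos _
  set p := t ^ (-(d : ℝ) / 2) with hp
  have hp0 : 0 < p := by positivity
  set G : ℝ := d.factorial * 32 ^ d with hG
  set r := Real.sqrt t / 2 with hr
  have hr0 : 0 < r := by positivity
  have hpr : p ^ 2 * t * r ^ (d - 2) ≤ p := by
    have h1 : r ^ (d - 2) ≤ Real.sqrt t ^ (d - 2) :=
      pow_le_pow_left₀ hr0.le (by rw [hr]; linarith) _
    have h2 : p * (Real.sqrt t ^ 2 * Real.sqrt t ^ (d - 2)) = 1 := by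
      rw [← pow_add, show 2 + (d - 2) = d by omega, hp, Real.sqrt_eq_rpow, ← Real.rpow_natCast,
        ← Real.rpow_mul ht.le, ← Real.rpow_add ht]
      rw [show -(d : ℝ) / 2 + 1 / 2 * d = 0 by ring, Real.rpow_zero]
    calc p ^ 2 * t * r ^ (d - 2) ≤ p ^ 2 * t * Real.sqrt t ^ (d - 2) := by gcongr
      _ = p * (p * (Real.sqrt t ^ 2 * Real.sqrt t ^ (d - 2))) := by rw [hsq]; ring
      _ = p := by rw [h2, mul_one]
  set Q := (96 * (8 * Real.pi) ^ ((d : ℝ) / 2) + 128 * G ^ 2 * V) * p * E * M with hQ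
  have hQ0 : 0 ≤ Q := by positivity
  have inner_le : ∀ s ∈ Set.Ioo (0 : ℝ) t, (∫⁻ z, ENNReal.ofReal (
          (t - s) ^ (-(d : ℝ) / 2) * Real.exp (-‖x - z‖ ^ 2 / (4 * (t - s))) *
            (1 / ‖z‖ ^ 2) * s ^ (-(d : ℝ) / 2) * Real.exp (-‖z - y‖ ^ 2 / (4 * s)))) ≤
      ENNReal.ofReal Q := by
    intro s hs
    have hs0 : 0 < s := hs.1
    have hτ : 0 < t - s := sub_pos.2 hs.2
    have hsum : t - s + s = t := by ring
    set c2 := 128 * t * M * G ^ 2 * p ^ 2 * E with hc2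
    have hc20 : 0 ≤ c2 := by positivity
    set F1 : EuclideanSpace ℝ (Fin d) → ℝ := fun z => 96 * M * ((t - s) ^ (-(d : ℝ) / 2) *
      s ^ (-(d : ℝ) / 2) * Real.exp (-(‖x - z‖ ^ 2 / (t - s) + ‖z - y‖ ^ 2 / s) / 8)) with hF1
    set F2 : EuclideanSpace ℝ (Fin d) → ℝ := fun z =>
      (Set.Iio r).indicator (fun u => 1 / u ^ 2) ‖z‖ with hF2
    have hpt : ∀ z, ENNReal.ofReal (
          (t - s) ^ (-(d : ℝ) / 2) * Real.exp (-‖x - z‖ ^ 2 / (4 * (t - s))) *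
            (1 / ‖z‖ ^ 2) * s ^ (-(d : ℝ) / 2) * Real.exp (-‖z - y‖ ^ 2 / (4 * s))) ≤
        ENNReal.ofReal (F1 z) + ENNReal.ofReal c2 * ENNReal.ofReal (F2 z) := by
      intro z
      have hxz : ‖x‖ ≤ ‖z‖ + ‖x - z‖ := by
        have := norm_add_le z (x - z); simpa using this
      have hyz : ‖y‖ ≤ ‖z‖ + ‖z - y‖ := by
        have := norm_sub_le z (z - y); simpa using this
      by_cases hz : ‖z‖ < r
      · refine le_trans ?_ le_add_self
        rw [← ENNReal.ofReal_mul hc20]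
        apply ENNReal.ofReal_le_ofReal
        simp only [hF2, Set.indicator_of_mem (show ‖z‖ ∈ Set.Iio r from hz)]
        refine aux_region2 d hX hY hτ hs0 hsum ?_ ?_ (norm_nonneg _) ?_ ?_ ?_
        · rw [← hsq]; exact pow_le_pow_left₀ hst.le hx 2
        · rw [← hsq]; exact pow_le_pow_left₀ hst.le hy 2
        · exact norm_sub_le_norm_sub_add_norm_sub x z y
        · linarith
        · linarith
      · refine le_trans ?_ le_self_add
        apply ENNReal.ofReal_le_ofReal
        have hz' : r ≤ ‖z‖ := not_lt.1 hz
        have h := aux_region1 hX hY hτ hs0 hsum (hr0.trans_le hz')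
          (by have := pow_le_pow_left₀ hr0.le hz' 2
              rw [hr, div_pow, hsq] at this; linarith) hxz hyz
        calc _ = ((t - s) ^ (-(d : ℝ) / 2) * s ^ (-(d : ℝ) / 2)) *
              (Real.exp (-‖x - z‖ ^ 2 / (4 * (t - s))) * (1 / ‖z‖ ^ 2) *
                Real.exp (-‖z - y‖ ^ 2 / (4 * s))) := by ring
          _ ≤ ((t - s) ^ (-(d : ℝ) / 2) * s ^ (-(d : ℝ) / 2)) * _ :=
              mul_le_mul_of_nonneg_left h (by positivity)
          _ = F1 z := by simp only [hF1, hM]; ring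
    calc _ ≤ ∫⁻ z, (ENNReal.ofReal (F1 z) + ENNReal.ofReal c2 * ENNReal.ofReal (F2 z)) :=
          lintegral_mono hpt
      _ = (∫⁻ z, ENNReal.ofReal (F1 z)) + ENNReal.ofReal c2 * ∫⁻ z, ENNReal.ofReal (F2 z) := by
          rw [lintegral_add_left (by fun_prop), lintegral_const_mul' _ _ ENNReal.ofReal_ne_top]
      _ ≤ ENNReal.ofReal (96 * M * ((8 * Real.pi) ^ ((d : ℝ) / 2) * p * E)) +
          ENNReal.ofReal c2 * ENNReal.ofReal (V * r ^ (d - 2)) := by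
          gcongr
          · exact aux_ck d hτ hs0 hsum x y (by positivity)
          · exact hball r hr0
      _ = ENNReal.ofReal (96 * M * ((8 * Real.pi) ^ ((d : ℝ) / 2) * p * E) +
          c2 * (V * r ^ (d - 2))) := by
          rw [← ENNReal.ofReal_mul hc20, ← ENNReal.ofReal_add (by positivity) (by positivity)]
      _ ≤ ENNReal.ofReal Q := by
          apply ENNReal.ofReal_le_ofReal
          have := mul_le_mul_of_nonneg_left hpr (by positivity : 0 ≤ 128 * M * G ^ 2 * E * V)
          simp only [hc2, hQ]
          linarith
  calc _ ≤ ∫⁻ s in Set.Ioo (0 : ℝ) t, ENNReal.ofReal Q := setLIntegral_mono measurable_const inner_le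
    _ = ENNReal.ofReal (Q * t) := by
        rw [setLIntegral_const, Real.volume_Ioo, sub_zero, ← ENNReal.ofReal_mul hQ0]
    _ = _ := by
        congr 1
        simp only [hQ, hM]
        ring
end

section
/- Let $d \ge 3$, let $0 < \sigma < d - 2$, and let $c > 0$. Then there exist constants $C > 0$ and $c' > 0$ depending only on $d, \sigma, c$ such that for all $t > 0$ and all $x, y \in \mathbb{R}^d$ with $|x| \ge \sqrt{t}$, $|y| \ge \sqrt{t}$, and $\tfrac12|y| \le |x| \le 2|y|$: $\int_0^t \left(\int_{|z| < \sqrt{t}} \frac{t^{\sigma/2}}{|z|^{2+\sigma}}\,dz\right) \bigl[s(t-s)\bigr]^{-\frac{d}{2}} \exp\left(-\frac{c\,t\,(|x|^2+|y|^2)}{s(t-s)}\right)ds \le C\, (|x|^2+|y|^2)^{-\frac{d}{2}} \exp\left(-\frac{c'(|x|^2+|y|^2)}{t}\right)$. -/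
open MeasureTheory

lemma aux_exp (d : ℕ) (c : ℝ) (hc : 0 < c) :
    ∃ M : ℝ, 0 < M ∧ ∀ w : ℝ, 0 < w → w ^ ((d : ℝ) / 2) * Real.exp (-(c * w)) ≤ M := by
  refine ⟨1 + (1 / c) ^ d * (d.factorial : ℝ), by positivity, fun w hw => ?_⟩
  have h1 : w ^ ((d : ℝ) / 2) ≤ 1 + w ^ d := by
    rcases le_total w 1 with h | h
    · have := Real.rpow_le_one hw.le h (z := (d : ℝ) / 2) (by positivity)
      have : 0 ≤ w ^ d := by positivity
      linarith
    · have := Real.rpow_le_rpow_of_exponent_le h (y := (d : ℝ) / 2) (z := d)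
        (by have : (0 : ℝ) ≤ d := by positivity
            linarith)
      rw [Real.rpow_natCast] at this
      linarith
  have h2 := Real.pow_div_factorial_le_exp (x := c * w) (by positivity) d
  have h3 : w ^ d ≤ (1 / c) ^ d * (d.factorial : ℝ) * Real.exp (c * w) := by
    have hf : (0 : ℝ) < d.factorial := by positivity
    rw [div_le_iff₀ hf, mul_pow] at h2
    have : w ^ d = (1 / c) ^ d * (c ^ d * w ^ d) := by
      rw [← mul_assoc, ← mul_pow]
      field_simp
      simp
    rw [this, mul_assoc, mul_comm (d.factorial : ℝ)]
    gcongr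
  have h4 : 1 ≤ Real.exp (c * w) := Real.one_le_exp (by positivity)
  rw [Real.exp_neg, ← div_eq_mul_inv, div_le_iff₀ (Real.exp_pos _)]
  linarith

lemma aux_inner (d : ℕ) (hd : 3 ≤ d) (σ : ℝ)
    (hσ0 : 0 < σ) (hσ : σ < (d : ℝ) - 2) :
    ∃ K : ℝ, 0 ≤ K ∧ ∀ t : ℝ, 0 < t →
      (∫⁻ z in {z : EuclideanSpace ℝ (Fin d) | ‖z‖ < Real.sqrt t},
              ENNReal.ofReal (t ^ (σ / 2) / ‖z‖ ^ (2 + σ)))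
        = ENNReal.ofReal (K * t ^ ((d : ℝ) / 2 - 1)) := by
  have hint : ∀ r : ℝ, IntegrableOn (fun z : EuclideanSpace ℝ (Fin d) => ‖z‖ ^ (-(2 + σ)))
      (Metric.ball 0 r) := by
    intro r
    refine integrableOn_ball_of_norm_le_rpow (C := 1) (α := 2 + σ) ?_ ?_ ?_ ?_
    · simp; omega
    · simp; linarith
    · refine Filter.Eventually.of_forall fun x => ?_
      rw [one_mul, Real.norm_of_nonneg (by positivity)]
    · exact (measurable_norm.pow_const _).aestronglyMeasurable
  refine ⟨∫ z in Metric.ball (0 : EuclideanSpace ℝ (Fin d)) 1, ‖z‖ ^ (-(2 + σ)),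
    integral_nonneg fun _ => by positivity, fun t ht => ?_⟩
  have hs : 0 < Real.sqrt t := Real.sqrt_pos.2 ht
  have hset : {z : EuclideanSpace ℝ (Fin d) | ‖z‖ < Real.sqrt t} = Metric.ball 0 (Real.sqrt t) := by
    ext z; simp
  have hfun : ∀ z : EuclideanSpace ℝ (Fin d),
      t ^ (σ / 2) / ‖z‖ ^ (2 + σ) = t ^ (σ / 2) * ‖z‖ ^ (-(2 + σ)) := by
    intro z
    rw [Real.rpow_neg (norm_nonneg _), div_eq_mul_inv]
  simp_rw [hset, hfun]
  rw [← ofReal_integral_eq_lintegral_ofReal ((hint _).const_mul _)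
    (Filter.Eventually.of_forall fun z => by positivity), integral_const_mul]
  congr 1
  have hsc := Measure.setIntegral_comp_smul_of_pos (volume : Measure (EuclideanSpace ℝ (Fin d)))
    (fun z => ‖z‖ ^ (-(2 + σ))) (Metric.ball 0 1) hs
  rw [smul_unitBall_of_pos hs] at hsc
  have hsq : ∀ a : ℝ, (Real.sqrt t) ^ a = t ^ (a / 2) := by
    intro a
    rw [Real.sqrt_eq_rpow, ← Real.rpow_mul ht.le]
    congr 1; ring
  have h2 : ∀ z : EuclideanSpace ℝ (Fin d),
      ‖Real.sqrt t • z‖ ^ (-(2 + σ)) = t ^ (-(2 + σ) / 2) * ‖z‖ ^ (-(2 + σ)) := by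
    intro z
    rw [norm_smul, Real.norm_of_nonneg hs.le, Real.mul_rpow hs.le (norm_nonneg _), hsq]
  simp_rw [h2] at hsc
  rw [integral_const_mul, finrank_euclideanSpace_fin, smul_eq_mul, ← Real.rpow_natCast, hsq,
    ← Real.rpow_neg ht.le] at hsc
  set K := ∫ z in Metric.ball (0 : EuclideanSpace ℝ (Fin d)) 1, ‖z‖ ^ (-(2 + σ))
  set J := ∫ z in Metric.ball (0 : EuclideanSpace ℝ (Fin d)) (Real.sqrt t), ‖z‖ ^ (-(2 + σ))
  have hJ : J = t ^ ((d : ℝ) / 2) * (t ^ (-(2 + σ) / 2) * K) := by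
    rw [hsc, ← mul_assoc, ← Real.rpow_add ht]; simp
  rw [hJ, ← mul_assoc, ← mul_assoc, ← Real.rpow_add ht, ← Real.rpow_add ht, mul_comm]
  congr 2; ring

/-- Reduced form of the small-`z` Duhamel contribution: for `d ≥ 3`, `0 < σ < d-2`,
`c > 0`, there are `C, c' > 0` such that for `t > 0` and `|x|, |y| ≥ √t` with
`|x| ∼ |y|` (within a factor 2),
`∫₀^t (∫_{|z|<√t} t^{σ/2}/|z|^{2+σ} dz) [s(t-s)]^{-d/2}
    exp(-c t (|x|²+|y|²)/(s(t-s))) ds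
  ≤ C (|x|²+|y|²)^{-d/2} exp(-c'(|x|²+|y|²)/t)`. -/
theorem duhamel_small_z (d : ℕ) (hd : 3 ≤ d) (σ c : ℝ)
    (hσ0 : 0 < σ) (hσ : σ < (d : ℝ) - 2) (hc : 0 < c) :
    ∃ C c' : ℝ, 0 < C ∧ 0 < c' ∧ ∀ t : ℝ, 0 < t →
      ∀ x y : EuclideanSpace ℝ (Fin d),
        Real.sqrt t ≤ ‖x‖ → Real.sqrt t ≤ ‖y‖ →
        ‖y‖ / 2 ≤ ‖x‖ → ‖x‖ ≤ 2 * ‖y‖ →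
      (∫⁻ s in Set.Ioo (0 : ℝ) t,
          (∫⁻ z in {z : EuclideanSpace ℝ (Fin d) | ‖z‖ < Real.sqrt t},
              ENNReal.ofReal (t ^ (σ / 2) / ‖z‖ ^ (2 + σ))) *
          ENNReal.ofReal ((s * (t - s)) ^ (-(d : ℝ) / 2) *
            Real.exp (-(c * t * (‖x‖ ^ 2 + ‖y‖ ^ 2)) / (s * (t - s))))) ≤
      ENNReal.ofReal (C * (‖x‖ ^ 2 + ‖y‖ ^ 2) ^ (-(d : ℝ) / 2) *
        Real.exp (-(c' * (‖x‖ ^ 2 + ‖y‖ ^ 2)) / t)) := by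
  obtain ⟨K, hK, hin⟩ := aux_inner d hd σ hσ0 hσ
  obtain ⟨M, hM, hexp⟩ := aux_exp d (c / 2) (by positivity)
  refine ⟨(K + 1) * M, c / 2, by positivity, by positivity, fun t ht x y hx hy _ _ => ?_⟩
  have hs : 0 < Real.sqrt t := Real.sqrt_pos.2 ht
  have hR : 0 < ‖x‖ ^ 2 + ‖y‖ ^ 2 := by
    have : 0 < ‖x‖ := hs.trans_le hx
    positivity
  generalize ‖x‖ ^ 2 + ‖y‖ ^ 2 = R at hR
  rw [hin t ht]
  have hpt : ∀ s ∈ Set.Ioo (0 : ℝ) t,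
      ENNReal.ofReal (K * t ^ ((d : ℝ) / 2 - 1)) *
        ENNReal.ofReal ((s * (t - s)) ^ (-(d : ℝ) / 2) *
            Real.exp (-(c * t * R) / (s * (t - s)))) ≤
      ENNReal.ofReal (K * t ^ ((d : ℝ) / 2 - 1) *
        (M * (t * R) ^ (-(d : ℝ) / 2) * Real.exp (-(c / 2 * R) / t))) := by
    rintro s ⟨h0, h1⟩
    rw [← ENNReal.ofReal_mul (by positivity)]
    apply ENNReal.ofReal_le_ofReal
    apply mul_le_mul_of_nonneg_left _ (by positivity)
    have hu : 0 < s * (t - s) := mul_pos h0 (by linarith)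
    have hut : s * (t - s) ≤ t * t := by nlinarith
    generalize s * (t - s) = u at hu hut
    have hw := hexp (t * R / u) (by positivity)
    have e1 : Real.exp (-(c * t * R) / u)
        = Real.exp (-(c / 2 * (t * R / u))) * Real.exp (-(c / 2 * (t * R / u))) := by
      rw [← Real.exp_add]; congr 1; ring
    have e2 : u ^ (-(d : ℝ) / 2) = (t * R) ^ (-(d : ℝ) / 2) * (t * R / u) ^ ((d : ℝ) / 2) := by
      rw [Real.div_rpow (by positivity) hu.le, neg_div, Real.rpow_neg hu.le,
        Real.rpow_neg (by positivity : 0 ≤ t * R)]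
      have : (t * R) ^ ((d : ℝ) / 2) ≠ 0 := by positivity
      field_simp
    have e3 : Real.exp (-(c / 2 * (t * R / u))) ≤ Real.exp (-(c / 2 * R) / t) := by
      apply Real.exp_le_exp.2
      rw [neg_div, neg_le_neg_iff, mul_div_assoc]
      apply mul_le_mul_of_nonneg_left _ (by positivity)
      rw [div_le_div_iff₀ ht hu]
      nlinarith
    calc _ = (t * R) ^ (-(d : ℝ) / 2) *
          ((t * R / u) ^ ((d : ℝ) / 2) * Real.exp (-(c / 2 * (t * R / u)))) *
            Real.exp (-(c / 2 * (t * R / u))) := by rw [e1, e2]; ring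
      _ ≤ (t * R) ^ (-(d : ℝ) / 2) * M * Real.exp (-(c / 2 * R) / t) := by gcongr
      _ = _ := by ring
  refine (setLIntegral_mono measurable_const hpt).trans ?_
  rw [setLIntegral_const, Real.volume_Ioo, sub_zero, ← ENNReal.ofReal_mul (by positivity)]
  apply ENNReal.ofReal_le_ofReal
  have e4 : t ^ ((d : ℝ) / 2 - 1) * (t * R) ^ (-(d : ℝ) / 2) * t = R ^ (-(d : ℝ) / 2) := by
    rw [Real.mul_rpow ht.le hR.le, ← mul_assoc, ← Real.rpow_add ht, mul_right_comm,
      ← Real.rpow_add_one ht.ne']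
    ring_nf
    simp
  calc _ = K * M * (t ^ ((d : ℝ) / 2 - 1) * (t * R) ^ (-(d : ℝ) / 2) * t) *
        Real.exp (-(c / 2 * R) / t) := by ring
    _ = K * M * R ^ (-(d : ℝ) / 2) * Real.exp (-(c / 2 * R) / t) := by rw [e4]
    _ ≤ _ := by gcongr; linarith
end

section
/- Let $\mu \ge 1$ be an integer, set $j = 3\mu$, let $0 < r \le R$, and let $A > 0$. Let $\varphi : \mathbb{R} \to [0,1]$ be a smooth even function supported in $[-\tfrac12, \tfrac12]$ with $\varphi(\tau) = 1$ for $|\tau| \le \tfrac14$, and define $\check{\varphi}_R(\lambda) = \tfrac{1}{2\pi}\int_{\mathbb{R}} e^{i\lambda\tau} \varphi(\tau/R)\,d\tau$. Let $a : \mathbb{R} \to \mathbb{C}$ be even, continuous with $a(0) = 0$, $j$ times continuously differentiable on $\mathbb{R}\setminus\{0\}$, and satisfy $|a^{(i)}(\lambda)| \le A\, |\lambda|^{-i} \left(\min(1, r|\lambda|)\right)^{2\mu}$ for all $\lambda \ne 0$ and all $0 \le i \le j$. Then there is a constant $C$ depending only on $\mu$ and $\varphi$ such that the function $a_2 := a *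 \check{\varphi}_R - a$ satisfies $|a_2(\lambda)| \le C A \left(\frac{\min(1, r|\lambda|)}{|\lambda| R}\right)^{2\mu} \left(1 + R^2\lambda^2\right)^{\frac{2\mu - j}{2}}$ for all $\lambda \ne 0$. -/
open MeasureTheory

theorem mrb_taylor (n : ℕ) : ∀ (F : ℕ → ℝ → ℂ) (l ρ M : ℝ),
    (∀ i < n, ∀ x ∈ Metric.closedBall l ρ, HasDerivAt (F i) (F (i+1) x) x) →
    (∀ x ∈ Metric.closedBall l ρ, ‖F n x‖ ≤ M) → ∀ x ∈ Metric.closedBall l ρ,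
    ‖F 0 x - ∑ i ∈ Finset.range n, F i l * (((x - l : ℝ) : ℂ) ^ i / (i.factorial : ℂ))‖
      ≤ M * |x - l| ^ n := by
  induction n with
  | zero => intro F l ρ M _ h x hx; simpa using h x hx
  | succ n ih =>
    intro F l ρ M hd hM x hx
    have ih' := ih (fun i => F (i+1)) l ρ M (fun i hi => hd (i+1) (by omega)) hM
    have hM0 : 0 ≤ M := (norm_nonneg _).trans (hM x hx)
    have hx' : |x - l| ≤ ρ := by simpa [Real.dist_eq] using hx
    have hsub : ∀ y ∈ Metric.closedBall l |x - l|, y ∈ Metric.closedBall l ρ :=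
      fun y hy => Metric.closedBall_subset_closedBall hx' hy
    have key := (convex_closedBall l |x - l|).norm_image_sub_le_of_norm_hasDerivWithin_le
      (f := fun y => F 0 y - ∑ i ∈ Finset.range (n+1), F i l * (((y - l : ℝ) : ℂ) ^ i / (i.factorial : ℂ)))
      (f' := fun y => F 1 y - ∑ i ∈ Finset.range n, F (i+1) l * (((y - l : ℝ) : ℂ) ^ i / (i.factorial : ℂ)))
      (C := M * |x - l| ^ n) (x := l) (y := x) ?_ ?_ (by simp) (by simp [Real.dist_eq])
    · have h0 : ∑ i ∈ Finset.range (n+1), F i l * (((l - l : ℝ) : ℂ) ^ i / (i.factorial : ℂ)) = F 0 l := by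
        rw [Finset.sum_range_succ']; simp
      rw [h0, sub_self, sub_zero] at key
      refine key.trans (le_of_eq ?_)
      rw [Real.norm_eq_abs, pow_succ, mul_assoc]
    · intro y hy
      refine HasDerivAt.hasDerivWithinAt ?_
      refine (hd 0 (by omega) y (hsub y hy)).sub ?_
      have : (fun y : ℝ => ∑ i ∈ Finset.range (n+1), F i l * (((y - l : ℝ) : ℂ) ^ i / (i.factorial : ℂ)))
        = fun y : ℝ => ∑ i ∈ Finset.range n, F (i+1) l * (((y - l : ℝ) : ℂ) ^ (i+1) / ((i+1).factorial : ℂ)) + F 0 l := by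
        funext y; rw [Finset.sum_range_succ']; simp
      rw [this]
      refine HasDerivAt.add_const _ ?_
      refine HasDerivAt.fun_sum (fun i _ => ?_)
      refine HasDerivAt.const_mul _ ?_
      have h1 : HasDerivAt (fun y : ℝ => ((y - l : ℝ) : ℂ)) 1 y := by
        simpa using ((hasDerivAt_id y).sub_const l).ofReal_comp
      have h2 := (h1.fun_pow (i+1)).div_const ((i+1).factorial : ℂ)
      convert! h2 using 1
      have e1 : (i.factorial : ℂ) ≠ 0 := by exact_mod_cast i.factorial_ne_zero
      have e2 : ((i:ℂ)+1) ≠ 0 := by exact_mod_cast i.succ_ne_zero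
      rw [Nat.factorial_succ]; push_cast; simp; field_simp
    · intro y hy
      refine (ih' y (hsub y hy)).trans ?_
      have : |y - l| ≤ |x - l| := by simpa [Real.dist_eq] using hy
      gcongr

theorem mrb_min {r q y x : ℝ} (hr : 0 < r) (hq : 1 ≤ q) (hy : 0 ≤ y) (hx : 0 ≤ x) (h : y ≤ q * x) :
    min 1 (r * y) ≤ q * min 1 (r * x) := by
  rcases le_total 1 (r * x) with h1 | h1
  · rw [min_eq_left h1]; exact (min_le_left _ _).trans (by linarith)
  · rw [min_eq_right h1]; refine (min_le_right _ _).trans ?_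
    nlinarith [mul_le_mul_of_nonneg_left h hr.le]

theorem mrb_pointwise (μ : ℕ) (r A : ℝ) (hr : 0 < r) (hA : 0 < A)
    (a : ℝ → ℂ) (ha0 : a 0 = 0)
    (hd : ContDiffOn ℝ (3 * μ) a {(0 : ℝ)}ᶜ)
    (hb : ∀ l : ℝ, l ≠ 0 → ∀ i : ℕ, i ≤ 3 * μ →
        ‖iteratedDeriv i a l‖ ≤ A * |l| ^ (-(i : ℝ)) * (min 1 (r * |l|)) ^ (2 * μ))
    (l : ℝ) (hl : l ≠ 0) (h : ℝ) :
    ‖a (l + h) - ∑ i ∈ Finset.range (3 * μ), iteratedDeriv i a l * ((h : ℂ) ^ i / (i.factorial : ℂ))‖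
      ≤ (32 ^ μ + 3 * μ * 8 ^ μ + 216 ^ μ) * A * (min 1 (r * |l|)) ^ (2 * μ) * (|h| / |l|) ^ (3 * μ) := by
  have hl' : 0 < |l| := abs_pos.2 hl
  set m := min 1 (r * |l|) with hm
  have hm0 : 0 ≤ m := le_min zero_le_one (by positivity)
  set q := |h| / |l| with hq
  have hq0 : 0 ≤ q := by positivity
  have hhq : |h| = q * |l| := by rw [hq]; field_simp
  have hb' : ∀ x : ℝ, x ≠ 0 → ∀ i : ℕ, i ≤ 3 * μ →
        ‖iteratedDeriv i a x‖ ≤ A * (|x| ^ i)⁻¹ * (min 1 (r * |x|)) ^ (2 * μ) := by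
    intro x hx i hi
    have := hb x hx i hi
    rwa [Real.rpow_neg (abs_nonneg x), Real.rpow_natCast] at this
  have p32 : (0:ℝ) ≤ 32 ^ μ := by positivity
  have p8 : (0:ℝ) ≤ 3 * μ * 8 ^ μ := by positivity
  have p216 : (0:ℝ) ≤ 216 ^ μ := by positivity
  rcases le_total |h| (|l| / 2) with hc | hc
  · have hball : ∀ x ∈ Metric.closedBall l (|l|/2), |l| / 2 ≤ |x| ∧ |x| ≤ 2 * |l| := by
      intro x hx
      have hx' : |x - l| ≤ |l|/2 := by simpa [Real.dist_eq] using hx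
      have h1 := abs_sub_abs_le_abs_sub l x
      have h2 := abs_sub_abs_le_abs_sub x l
      rw [abs_sub_comm] at h1
      constructor <;> linarith
    have hne : ∀ x ∈ Metric.closedBall l (|l|/2), x ≠ 0 := by
      intro x hx; have := (hball x hx).1; exact abs_pos.1 (by linarith)
    have := mrb_taylor (3 * μ) (fun i => iteratedDeriv i a) l (|l|/2)
      (32 ^ μ * A * m ^ (2 * μ) * (|l| ^ (3 * μ))⁻¹) ?_ ?_ (l + h) (by simpa [Real.dist_eq] using hc)
    · simp only [iteratedDeriv_zero, add_sub_cancel_left] at this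
      refine this.trans ?_
      have e : 32 ^ μ * A * m ^ (2 * μ) * (|l| ^ (3 * μ))⁻¹ * |h| ^ (3 * μ)
         = 32 ^ μ * A * m ^ (2 * μ) * q ^ (3 * μ) := by rw [hq, div_pow]; ring
      rw [e]
      gcongr
      linarith
    · intro i hi x hx
      have hx0 := hne x hx
      have hO : IsOpen ({(0:ℝ)}ᶜ : Set ℝ) := isOpen_compl_singleton
      have hdw := hd.differentiableOn_iteratedDerivWithin (m := i) (by exact_mod_cast hi) hO.uniqueDiffOn
      have hda := (hdw x hx0).differentiableAt (hO.mem_nhds hx0)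
      have he : iteratedDerivWithin i a {(0:ℝ)}ᶜ =ᶠ[nhds x] iteratedDeriv i a :=
        Filter.eventuallyEq_of_mem (hO.mem_nhds hx0) (iteratedDerivWithin_of_isOpen hO)
      have := (he.differentiableAt_iff.1 hda).hasDerivAt
      simpa [iteratedDeriv_succ] using this
    · intro x hx
      obtain ⟨h1, h2⟩ := hball x hx
      refine (hb' x (hne x hx) _ le_rfl).trans ?_
      have h3 : min 1 (r * |x|) ≤ 2 * m := mrb_min hr (by norm_num) (abs_nonneg _) (abs_nonneg _) h2
      have h4 : 0 ≤ min 1 (r * |x|) := le_min zero_le_one (by positivity)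
      calc A * (|x| ^ (3 * μ))⁻¹ * min 1 (r * |x|) ^ (2 * μ)
          ≤ A * ((|l|/2) ^ (3 * μ))⁻¹ * (2 * m) ^ (2 * μ) := by gcongr
        _ = _ := by
          rw [div_pow, mul_pow, pow_mul 2 3, pow_mul 2 2, inv_div,
            show (32:ℝ) = 2 ^ 3 * 2 ^ 2 by norm_num, mul_pow (2^3 : ℝ)]
          field_simp
  · have hq1 : 1 ≤ 2 * q := by rw [hq, ← mul_div_assoc, le_div_iff₀ hl']; linarith
    have hA0 : ‖a (l + h)‖ ≤ 216 ^ μ * A * m ^ (2 * μ) * q ^ (3 * μ) := by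
      by_cases hz : l + h = 0
      · rw [hz, ha0, norm_zero]; positivity
      have h1 := hb' (l + h) hz 0 (Nat.zero_le _)
      simp only [iteratedDeriv_zero, pow_zero, inv_one, mul_one] at h1
      refine h1.trans ?_
      have h2 : |l + h| ≤ (6 * q) * |l| := by
        have := abs_add_le l h
        nlinarith
      have h3 : min 1 (r * |l + h|) ≤ 6 * q * m := mrb_min hr (by linarith) (abs_nonneg _) (abs_nonneg _) h2
      have h4 : 0 ≤ min 1 (r * |l + h|) := le_min zero_le_one (by positivity)
      calc A * min 1 (r * |l + h|) ^ (2 * μ) ≤ A * (6 * q * m) ^ (2 * μ) := by gcongr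
        _ = A * ((6 * q) ^ (2 * μ) * m ^ (2 * μ)) := by rw [mul_pow]
        _ ≤ A * ((6 * q) ^ (3 * μ) * m ^ (2 * μ)) := by
          gcongr
          · linarith
          · norm_num
        _ = _ := by
          rw [mul_pow, pow_mul 6 3]; norm_num; ring
    have hS : ‖∑ i ∈ Finset.range (3 * μ), iteratedDeriv i a l * ((h : ℂ) ^ i / (i.factorial : ℂ))‖
        ≤ 3 * μ * 8 ^ μ * A * m ^ (2 * μ) * q ^ (3 * μ) := by
      have : ∀ i ∈ Finset.range (3 * μ), ‖iteratedDeriv i a l * ((h : ℂ) ^ i / (i.factorial : ℂ))‖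
          ≤ 8 ^ μ * A * m ^ (2 * μ) * q ^ (3 * μ) := by
        intro i hi
        have hi' := (Finset.mem_range.1 hi).le
        rw [norm_mul, norm_div, norm_pow, Complex.norm_natCast, Complex.norm_real, Real.norm_eq_abs]
        have hf : (1:ℝ) ≤ (i.factorial : ℝ) := by exact_mod_cast i.factorial_pos
        calc ‖iteratedDeriv i a l‖ * (|h| ^ i / i.factorial)
            ≤ (A * (|l| ^ i)⁻¹ * m ^ (2 * μ)) * |h| ^ i := by
              gcongr
              · exact hb' l hl i hi'
              · exact div_le_self (by positivity) hf
          _ = A * m ^ (2 * μ) * q ^ i := by rw [hq, div_pow]; ring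
          _ ≤ A * m ^ (2 * μ) * (2 * q) ^ i := by gcongr; linarith
          _ ≤ A * m ^ (2 * μ) * (2 * q) ^ (3 * μ) := by gcongr
          _ = _ := by rw [mul_pow, pow_mul 2 3]; norm_num; ring
      refine (norm_sum_le_of_le _ this).trans (le_of_eq ?_)
      simp; ring
    refine (norm_sub_le _ _).trans ((add_le_add hA0 hS).trans ?_)
    have : 0 ≤ 32 ^ μ * A * m ^ (2 * μ) * q ^ (3 * μ) := by positivity
    linarith

open FourierTransform SchwartzMap in
theorem mrb_kernel (φ : ℝ → ℝ)
    (hφ_smooth : ContDiff ℝ (⊤ : ℕ∞) φ)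
    (hφ_supp : ∀ τ : ℝ, 1 / 2 < |τ| → φ τ = 0)
    (hφ_one : ∀ τ : ℝ, |τ| ≤ 1 / 4 → φ τ = 1) :
    ∃ ψ : 𝓢(ℝ, ℂ), (∀ R : ℝ, 0 < R → ∀ u : ℝ,
      ((1 / (2 * Real.pi) : ℂ) *
              ∫ τ : ℝ, Complex.exp (Complex.I * ((u : ℂ) * (τ : ℂ))) *
                ((φ (τ / R) : ℝ) : ℂ)) = ((R / (2 * Real.pi) : ℝ) : ℂ) * ψ (R / (2 * Real.pi) * u)) ∧
      (∫ x, ψ x = 1) ∧ ∀ k : ℕ, 1 ≤ k → ∫ x : ℝ, (x : ℂ) ^ k * ψ x = 0 := by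
  have hc : HasCompactSupport (fun x => (φ x : ℂ)) := by
    refine HasCompactSupport.of_support_subset_isCompact (K := Set.Icc (-(1/2)) (1/2)) isCompact_Icc ?_
    intro x hx
    by_contra hn
    apply hx
    have : 1/2 < |x| := by
      by_contra h'
      exact hn (abs_le.1 (not_lt.1 h'))
    simp [hφ_supp x this]
  have hs : ContDiff ℝ (⊤ : ℕ∞) (fun x => (φ x : ℂ)) := Complex.ofRealCLM.contDiff.comp hφ_smooth
  let Φ : 𝓢(ℝ, ℂ) := hc.toSchwartzMap hs
  have hΦ : ∀ x, Φ x = (φ x : ℂ) := fun x => rfl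
  let ψ : 𝓢(ℝ, ℂ) := 𝓕⁻ Φ
  have hF : 𝓕 (ψ : ℝ → ℂ) = (Φ : ℝ → ℂ) := by
    rw [← SchwartzMap.fourier_coe]; simp [ψ]
  have hev : (Φ : ℝ → ℂ) =ᶠ[nhds 0] fun _ => (1 : ℂ) := by
    filter_upwards [Metric.closedBall_mem_nhds (0:ℝ) (by norm_num : (0:ℝ) < 1/4)] with x hx
    rw [hΦ, hφ_one x (by simpa [Real.dist_eq] using hx)]; simp
  have hmom : ∀ k : ℕ, iteratedDeriv k (fun _ : ℝ => (1:ℂ)) 0 = ∫ x : ℝ, (-2 * Real.pi * Complex.I * x) ^ k • ψ x := by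
    intro k
    have h1 := Real.iteratedDeriv_fourier (f := (ψ : ℝ → ℂ)) (N := ⊤) (n := k) (fun n _ => by
      refine (integrable_norm_iff ?_).1 ?_
      · exact (by fun_prop : Continuous fun x : ℝ => x ^ n • ψ x).aestronglyMeasurable
      · simpa [norm_smul] using ψ.integrable_pow_mul volume n) le_top
    have h2 := congrFun h1 0
    rw [hF, hev.iteratedDeriv_eq] at h2
    rw [h2, Real.fourier_eq]
    simp
  refine ⟨ψ, ?_, ?_, ?_⟩
  · intro R hR u
    have hψ : ψ (R / (2 * Real.pi) * u) = ∫ v : ℝ, Complex.exp (Complex.I * ((u : ℂ) * ((v * R : ℝ) : ℂ))) * ((φ v : ℝ) : ℂ) := by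
      have : ψ (R / (2 * Real.pi) * u) = 𝓕⁻ (Φ : ℝ → ℂ) (R / (2 * Real.pi) * u) := by
        rw [← SchwartzMap.fourierInv_coe]
      rw [this, Real.fourierInv_eq']
      congr 1; funext v
      rw [hΦ, smul_eq_mul]
      congr 2
      have := Complex.ofReal_ne_zero.2 Real.pi_ne_zero
      simp
      field_simp
    rw [hψ]
    have := Measure.integral_comp_mul_right (fun τ : ℝ => Complex.exp (Complex.I * ((u : ℂ) * (τ : ℂ))) * ((φ (τ / R) : ℝ) : ℂ)) R
    simp only [mul_div_cancel_right₀ _ hR.ne'] at this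
    rw [this, abs_of_pos (inv_pos.2 hR), Complex.real_smul]
    have := Complex.ofReal_ne_zero.2 hR.ne'
    have := Complex.ofReal_ne_zero.2 Real.pi_ne_zero
    push_cast
    field_simp
  · simpa using (hmom 0).symm
  · intro k hk
    have := hmom k
    have h0 : iteratedDeriv k (fun _ : ℝ => (1:ℂ)) 0 = 0 := by
      rw [iteratedDeriv_const]; simp; omega
    rw [h0] at this
    simp only [mul_pow (-2 * Real.pi * Complex.I : ℂ), smul_eq_mul, mul_assoc ((-2 * Real.pi * Complex.I : ℂ)^k)] at this
    rw [integral_const_mul] at this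
    rcases mul_eq_zero.1 this.symm with h | h
    · exfalso
      simp at h
    · exact h

/-- Bound on the remainder `a₂ = a * φ̌_R - a` in the finite-propagation-speed
decomposition of a truncated Mikhlin multiplier: if `a` is even, vanishes at `0`,
is `j := 3μ` times continuously differentiable away from `0` with
`|a^{(i)}(λ)| ≤ A |λ|^{-i} (min(1, r|λ|))^{2μ}` for `0 ≤ i ≤ j`, then
`|a₂(λ)| ≤ C A ((min(1, r|λ|))/(|λ|R))^{2μ} (1 + R²λ²)^{(2μ-j)/2}` with `C`
depending only on `μ` and `φ`. -/
theorem multiplier_remainder_bound (μ : ℕ) (hμ : 1 ≤ μ) (φ : ℝ → ℝ)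
    (hφ_smooth : ContDiff ℝ (⊤ : ℕ∞) φ)
    (hφ_range : ∀ τ, φ τ ∈ Set.Icc (0 : ℝ) 1)
    (hφ_even : ∀ τ, φ (-τ) = φ τ)
    (hφ_supp : ∀ τ : ℝ, 1 / 2 < |τ| → φ τ = 0)
    (hφ_one : ∀ τ : ℝ, |τ| ≤ 1 / 4 → φ τ = 1) :
    ∃ C : ℝ, 0 < C ∧ ∀ r R A : ℝ, 0 < r → r ≤ R → 0 < A →
      ∀ a : ℝ → ℂ, (∀ l : ℝ, a (-l) = a l) → Continuous a → a 0 = 0 →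
      ContDiffOn ℝ (3 * μ) a {(0 : ℝ)}ᶜ →
      (∀ l : ℝ, l ≠ 0 → ∀ i : ℕ, i ≤ 3 * μ →
        ‖iteratedDeriv i a l‖ ≤ A * |l| ^ (-(i : ℝ)) * (min 1 (r * |l|)) ^ (2 * μ)) →
      ∀ l : ℝ, l ≠ 0 →
        ‖(∫ θ : ℝ, a θ * ((1 / (2 * Real.pi) : ℂ) *
              ∫ τ : ℝ, Complex.exp (Complex.I * (((l - θ : ℝ) : ℂ) * (τ : ℂ))) *
                ((φ (τ / R) : ℝ) : ℂ))) - a l‖ ≤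
          C * A * ((min 1 (r * |l|)) / (|l| * R)) ^ (2 * μ) *
            (1 + R ^ 2 * l ^ 2) ^ ((2 * (μ : ℝ) - 3 * (μ : ℝ)) / 2) := by
  obtain ⟨ψ, hK, hψ1, hψk⟩ := mrb_kernel φ hφ_smooth hφ_supp hφ_one
  have hpi := Real.pi_pos
  obtain ⟨C0, hC0⟩ : ∃ C0 : ℝ, C0 = 32 ^ μ + 3 * μ * 8 ^ μ + 216 ^ μ := ⟨_, rfl⟩
  have hC0p : 0 ≤ C0 := by rw [hC0]; positivity
  have hint : ∀ k : ℕ, Integrable (fun x : ℝ => |x| ^ k * ‖ψ x‖) := fun k => by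
    simpa using ψ.integrable_pow_mul volume k
  have hintc : ∀ k : ℕ, Integrable (fun x : ℝ => (x : ℂ) ^ k * ψ x) := fun k => by
    refine (integrable_norm_iff ?_).1 ?_
    · exact (by fun_prop : Continuous fun x : ℝ => (x : ℂ) ^ k * ψ x).aestronglyMeasurable
    · simpa using hint k
  have hint2 : Integrable (fun x : ℝ => (1 + 2 * Real.pi * |x|) ^ (2 * μ) * ‖ψ x‖) := by
    have : (fun x : ℝ => (1 + 2 * Real.pi * |x|) ^ (2 * μ) * ‖ψ x‖) = fun x : ℝ =>
        ∑ k ∈ Finset.range (2 * μ + 1), ((2 * Real.pi) ^ k * ((2 * μ).choose k : ℝ)) * (|x| ^ k * ‖ψ x‖) := by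
      funext x
      rw [add_comm, add_pow, Finset.sum_mul]
      refine Finset.sum_congr rfl fun k _ => ?_
      rw [mul_pow, one_pow]; ring
    rw [this]
    exact integrable_finsetSum _ fun k _ => (hint k).const_mul _
  obtain ⟨D1, hD1⟩ : ∃ D1 : ℝ, D1 = ∫ x : ℝ, |x| ^ (3 * μ) * ‖ψ x‖ := ⟨_, rfl⟩
  obtain ⟨D2, hD2⟩ : ∃ D2 : ℝ, D2 = ∫ x : ℝ, (1 + 2 * Real.pi * |x|) ^ (2 * μ) * ‖ψ x‖ := ⟨_, rfl⟩
  have hD1p : 0 ≤ D1 := by rw [hD1]; exact integral_nonneg fun x => by positivity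
  have hD2p : 0 ≤ D2 := by rw [hD2]; exact integral_nonneg fun x => by positivity
  obtain ⟨E1, hE1⟩ : ∃ E1 : ℝ, E1 = C0 * (2 * Real.pi) ^ (3 * μ) * D1 := ⟨_, rfl⟩
  have hE1p : 0 ≤ E1 := by rw [hE1]; positivity
  refine ⟨2 ^ μ * (E1 + D2 + 1), by positivity, ?_⟩
  intro r R A hr hrR hA a _ hac ha0 hd hb l hl
  have hR : 0 < R := hr.trans_le hrR
  have hl' : 0 < |l| := abs_pos.2 hl
  have hbd : ∀ θ, ‖a θ‖ ≤ A * (min 1 (r * |θ|)) ^ (2 * μ) := by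
    intro θ
    by_cases hz : θ = 0
    · rw [hz, ha0, norm_zero]
      have : (0:ℝ) ≤ min 1 (r * |0|) := le_min zero_le_one (by positivity)
      positivity
    · simpa using hb θ hz 0 (Nat.zero_le _)
  have hbdA : ∀ θ, ‖a θ‖ ≤ A := by
    intro θ
    have h0 : (0:ℝ) ≤ min 1 (r * |θ|) := le_min zero_le_one (by positivity)
    have := pow_le_one₀ (n := 2 * μ) h0 (min_le_left _ _)
    refine (hbd θ).trans ?_
    nlinarith
  obtain ⟨c, hc⟩ : ∃ c : ℝ, c = R / (2 * Real.pi) := ⟨_, rfl⟩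
  have hcp : 0 < c := by rw [hc]; positivity
  have hci : c⁻¹ = 2 * Real.pi / R := by rw [hc, inv_div]
  have hsubst : (∫ θ : ℝ, a θ * ((1 / (2 * Real.pi) : ℂ) *
              ∫ τ : ℝ, Complex.exp (Complex.I * (((l - θ : ℝ) : ℂ) * (τ : ℂ))) *
                ((φ (τ / R) : ℝ) : ℂ))) = ∫ x : ℝ, a (l + (-(c⁻¹ * x))) * ψ x := by
    simp only [hK R hR, ← hc]
    have h1 := integral_sub_left_eq_self (fun u : ℝ => a (l - u) * ((c : ℂ) * ψ (c * u))) volume l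
    simp only [sub_sub_cancel] at h1
    rw [h1]
    have h2 := Measure.integral_comp_mul_left (fun x : ℝ => a (l + (-(c⁻¹ * x))) * ψ x) c
    simp only [inv_mul_cancel_left₀ hcp.ne'] at h2
    have h3 : (fun u : ℝ => a (l - u) * ((c : ℂ) * ψ (c * u))) = fun u : ℝ => (c : ℂ) * (a (l + -u) * ψ (c * u)) := by
      funext u; rw [← sub_eq_add_neg]; ring
    rw [h3, integral_const_mul, h2, abs_of_pos (inv_pos.2 hcp), Complex.real_smul]
    have := Complex.ofReal_ne_zero.2 hcp.ne'
    push_cast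
    field_simp
  rw [hsubst]
  have hai : Integrable (fun x : ℝ => a (l + (-(c⁻¹ * x))) * ψ x) := by
    refine Integrable.bdd_mul (c := A) ψ.integrable ?_ ?_
    · exact (by fun_prop : Continuous fun x : ℝ => a (l + (-(c⁻¹ * x)))).aestronglyMeasurable
    · exact Filter.Eventually.of_forall fun x => hbdA _
  obtain ⟨m, hm⟩ : ∃ m : ℝ, m = min 1 (r * |l|) := ⟨_, rfl⟩
  have hm0 : 0 ≤ m := by rw [hm]; exact le_min zero_le_one (by positivity)
  have hsq : R ^ 2 * l ^ 2 = (|l| * R) ^ 2 := by rw [mul_pow, sq_abs]; ring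
  rw [← hm, hsq]
  obtain ⟨X, hX⟩ : ∃ X : ℝ, X = |l| * R := ⟨_, rfl⟩
  have hXp : 0 < X := by rw [hX]; positivity
  rw [← hX]
  have hdec : ∀ y : ℝ, 0 < y → 1 + X ^ 2 ≤ y ^ 2 →
      (y ^ μ)⁻¹ ≤ (1 + X ^ 2) ^ ((2 * (μ : ℝ) - 3 * (μ : ℝ)) / 2) := by
    intro y hy hXy
    have h1 : (0:ℝ) < 1 + X ^ 2 := by positivity
    have h2 : (2 * (μ : ℝ) - 3 * (μ : ℝ)) / 2 ≤ 0 := by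
      have : (0:ℝ) ≤ μ := Nat.cast_nonneg _
      linarith
    refine le_trans (le_of_eq ?_) (Real.rpow_le_rpow_of_nonpos h1 hXy h2)
    rw [← Real.rpow_natCast y 2, ← Real.rpow_mul hy.le, ← Real.rpow_natCast y μ, ← Real.rpow_neg hy.le]
    congr 1
    push_cast; ring
  rcases le_total 1 X with h1X | hX1
  · -- large frequencies: vanishing moments
    have hTi : ∀ i ∈ Finset.range (3 * μ), Integrable (fun x : ℝ =>
        iteratedDeriv i a l * (((-(c⁻¹ * x) : ℝ) : ℂ) ^ i / (i.factorial : ℂ)) * ψ x) := by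
      intro i _
      convert! (hintc i).const_mul (iteratedDeriv i a l * ((-(c⁻¹) : ℝ) : ℂ) ^ i / (i.factorial : ℂ)) using 2 with x
      push_cast; rw [← neg_mul, mul_pow]; ring
    have hT : ∫ x : ℝ, (∑ i ∈ Finset.range (3 * μ),
        iteratedDeriv i a l * (((-(c⁻¹ * x) : ℝ) : ℂ) ^ i / (i.factorial : ℂ))) * ψ x = a l := by
      simp only [Finset.sum_mul]
      rw [integral_finsetSum _ hTi, Finset.sum_eq_single 0]
      · simp only [iteratedDeriv_zero, pow_zero, Nat.factorial_zero, Nat.cast_one, div_one, mul_one]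
        rw [integral_const_mul, hψ1, mul_one]
      · intro i _ hi
        have : (fun x : ℝ => iteratedDeriv i a l * (((-(c⁻¹ * x) : ℝ) : ℂ) ^ i / (i.factorial : ℂ)) * ψ x)
          = fun x : ℝ => (iteratedDeriv i a l * ((-(c⁻¹) : ℝ) : ℂ) ^ i / (i.factorial : ℂ)) * ((x : ℂ) ^ i * ψ x) := by
          funext x; push_cast; rw [← neg_mul, mul_pow]; ring
        rw [this, integral_const_mul, hψk i (by omega), mul_zero]
      · intro h; exfalso; apply h; simp; omega
    have hTint : Integrable (fun x : ℝ => (∑ i ∈ Finset.range (3 * μ),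
        iteratedDeriv i a l * (((-(c⁻¹ * x) : ℝ) : ℂ) ^ i / (i.factorial : ℂ))) * ψ x) := by
      simp only [Finset.sum_mul]
      exact integrable_finsetSum _ hTi
    have hfin : ‖(∫ x : ℝ, a (l + (-(c⁻¹ * x))) * ψ x) - a l‖ ≤ E1 * A * m ^ (2 * μ) * (X ^ (3 * μ))⁻¹ := by
      rw [← hT, ← integral_sub hai hTint]
      refine (norm_integral_le_of_norm_le (g := fun x : ℝ => (C0 * A * m ^ (2 * μ) * (c⁻¹ / |l|) ^ (3 * μ)) * (|x| ^ (3 * μ) * ‖ψ x‖))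
        ((hint _).const_mul _) (Filter.Eventually.of_forall fun x => ?_)).trans (le_of_eq ?_)
      · rw [← sub_mul, norm_mul]
        have hp := mrb_pointwise μ r A hr hA a ha0 hd hb l hl (-(c⁻¹ * x))
        rw [← hC0, ← hm] at hp
        refine (mul_le_mul_of_nonneg_right hp (norm_nonneg _)).trans (le_of_eq ?_)
        rw [abs_neg, abs_mul, abs_of_pos (inv_pos.2 hcp), mul_div_right_comm, mul_pow]
        ring
      · rw [integral_const_mul, ← hD1, hE1, hci, hX, div_div, div_pow, mul_comm R]
        ring
    refine hfin.trans ?_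
    have hy := hdec (2 * X) (by positivity) (by nlinarith)
    calc E1 * A * m ^ (2 * μ) * (X ^ (3 * μ))⁻¹
        = 2 ^ μ * E1 * A * (m / X) ^ (2 * μ) * ((2 * X) ^ μ)⁻¹ := by
          rw [mul_pow, div_pow, show 3 * μ = 2 * μ + μ by ring, pow_add]
          field_simp
      _ ≤ _ := by
          gcongr
          linarith
  · -- small frequencies
    have hrl : m = r * |l| := by
      rw [hm]; apply min_eq_right
      have : r * |l| ≤ |l| * R := by nlinarith
      linarith
    have hmX : m / X = r / R := by rw [hrl, hX]; field_simp
    have hlR : |l| ≤ 1 / R := by rw [le_div_iff₀ hR]; linarith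
    have hbr : ∀ θ, ‖a θ‖ ≤ A * (r * |θ|) ^ (2 * μ) := by
      intro θ
      have h0 : (0:ℝ) ≤ min 1 (r * |θ|) := le_min zero_le_one (by positivity)
      refine (hbd θ).trans ?_
      gcongr
      exact min_le_right _ _
    have h1 : ‖a l‖ ≤ A * (r / R) ^ (2 * μ) := by
      refine (hbr l).trans ?_
      gcongr
      calc r * |l| ≤ r * (1 / R) := by gcongr
        _ = r / R := by ring
    have h2 : ‖∫ x : ℝ, a (l + (-(c⁻¹ * x))) * ψ x‖ ≤ A * (r / R) ^ (2 * μ) * D2 := by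
      rw [hD2, ← integral_const_mul]
      refine norm_integral_le_of_norm_le (hint2.const_mul _) (Filter.Eventually.of_forall fun x => ?_)
      rw [norm_mul]
      have h3 : r * |l + (-(c⁻¹ * x))| ≤ (r / R) * (1 + 2 * Real.pi * |x|) := by
        have h4 := abs_add_le l (-(c⁻¹ * x))
        rw [abs_neg, abs_mul, abs_of_pos (inv_pos.2 hcp), hci] at h4
        rw [hci]
        calc r * |l + -(2 * Real.pi / R * x)| ≤ r * (1 / R + 2 * Real.pi / R * |x|) := by gcongr; linarith
          _ = _ := by ring
      calc ‖a (l + (-(c⁻¹ * x)))‖ * ‖ψ x‖ ≤ (A * ((r / R) * (1 + 2 * Real.pi * |x|)) ^ (2 * μ)) * ‖ψ x‖ := by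
            gcongr
            refine (hbr _).trans ?_
            gcongr
        _ = _ := by rw [mul_pow]; ring
    have hy := hdec 2 (by norm_num) (by nlinarith)
    rw [hmX]
    calc _ ≤ A * (r / R) ^ (2 * μ) * D2 + A * (r / R) ^ (2 * μ) := (norm_sub_le _ _).trans (add_le_add h2 h1)
      _ = 2 ^ μ * (D2 + 1) * A * (r / R) ^ (2 * μ) * (2 ^ μ)⁻¹ := by field_simp
      _ ≤ _ := by
        gcongr
        linarith
end

section
/- Let $\mu \ge 1$ and $J \ge 0$ be integers, let $r > 0$, let $A > 0$, and let $m : (0,\infty) \to \mathbb{C}$ be $J$ times continuously differentiable with $|m^{(i)}(\lambda)| \le A\,\lambda^{-i}$ for all $\lambda > 0$ and all $0 \le i \le J$. Then the function $a(\lambda) := m(\lambda)\bigl(1 - e^{-r^2\lambda^2}\bigr)^{\mu}$ satisfies $|a^{(i)}(\lambda)| \le C A\, \lambda^{-i}\left(\min(1, r\lambda)\right)^{2\mu}$ for all $\lambda > 0$ and all $0 \le i \le J$, where $C$ depends only on $\mu$ and $J$. -/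
open MeasureTheory
lemma poly_bd (Q : Polynomial ℝ) : ∃ B : ℝ, 0 ≤ B ∧ ∀ x : ℝ, 0 ≤ x → |Q.eval x| * Real.exp (-x^2) ≤ B := by
  induction Q using Polynomial.induction_on' with
  | add p q hp hq =>
    obtain ⟨B, hB, h1⟩ := hp
    obtain ⟨D, hD, h2⟩ := hq
    refine ⟨B + D, by positivity, fun x hx => ?_⟩
    have := h1 x hx
    have := h2 x hx
    rw [Polynomial.eval_add]
    have := mul_le_mul_of_nonneg_right (abs_add_le (p.eval x) (q.eval x)) (Real.exp_pos (-x^2)).le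
    linarith
  | monomial n a =>
    refine ⟨|a| * (n.factorial * Real.exp 1), by positivity, fun x hx => ?_⟩
    rw [Polynomial.eval_monomial, abs_mul, abs_of_nonneg (pow_nonneg hx n), mul_assoc]
    refine mul_le_mul_of_nonneg_left ?_ (abs_nonneg a)
    have h := Real.pow_div_factorial_le_exp x hx n
    rw [div_le_iff₀ (by positivity)] at h
    calc x^n * Real.exp (-x^2) ≤ (Real.exp x * n.factorial) * Real.exp (-x^2) := by gcongr
      _ = n.factorial * Real.exp (x + -x^2) := by rw [Real.exp_add]; ring
      _ ≤ _ := by gcongr; nlinarith [sq_nonneg (x-1)]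

noncomputable def GG (x : ℝ) : ℂ := ((1 - Real.exp (-x^2) : ℝ) : ℂ)

lemma GG_contDiff : ContDiff ℝ ⊤ GG := by
  unfold GG
  exact Complex.ofRealCLM.contDiff.comp (by fun_prop : ContDiff ℝ ⊤ fun x : ℝ => 1 - Real.exp (-x^2))

lemma GG_deriv (i : ℕ) : ∃ P : Polynomial ℝ, (i = 0 → Polynomial.X ∣ P) ∧
    iteratedDeriv (i+1) GG = fun x => ((P.eval x * Real.exp (-x^2) : ℝ) : ℂ) := by
  induction i with
  | zero =>
    refine ⟨2 * Polynomial.X, fun _ => Dvd.intro_left _ rfl, ?_⟩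
    rw [zero_add, iteratedDeriv_one]
    funext x
    refine HasDerivAt.deriv (HasDerivAt.ofReal_comp ?_)
    have := (((hasDerivAt_pow 2 x).neg).exp).const_sub 1
    refine this.congr_deriv ?_
    simp
    try ring
  | succ i ih =>
    obtain ⟨P, _, h⟩ := ih
    refine ⟨P.derivative - 2 * Polynomial.X * P, by simp, ?_⟩
    rw [iteratedDeriv_succ, h]
    funext x
    refine HasDerivAt.deriv (HasDerivAt.ofReal_comp ?_)
    have := (P.hasDerivAt x).mul (((hasDerivAt_pow 2 x).neg).exp)
    refine this.congr_deriv ?_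
    simp
    try ring

lemma GG_bd (i : ℕ) : ∃ B : ℝ, 0 ≤ B ∧ ∀ x : ℝ, 0 < x →
    x^i * ‖iteratedDeriv i GG x‖ ≤ B * (min 1 x)^2 := by
  have key : ∀ x B D y : ℝ, 0 < x → 0 ≤ B → 0 ≤ D → y ≤ B → y ≤ D * x^2 →
      y ≤ (B + D) * (min 1 x)^2 := by
    intro x B D y hx hB hD h1 h2
    rcases le_total 1 x with h | h
    · rw [min_eq_left h]; linarith
    · rw [min_eq_right h]; nlinarith [mul_nonneg hB (sq_nonneg x)]
  rcases i with _ | i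
  · refine ⟨1 + 1, by norm_num, fun x hx => key x 1 1 _ hx zero_le_one zero_le_one ?_ ?_⟩
    all_goals
      have h0 := Real.exp_pos (-x^2)
      have h1 : Real.exp (-x^2) ≤ 1 := Real.exp_le_one_iff.2 (by nlinarith [sq_nonneg x])
      have h2 := Real.add_one_le_exp (-x^2)
      simp only [pow_zero, one_mul, iteratedDeriv_zero, GG, Complex.norm_real, Real.norm_eq_abs]
      rw [abs_of_nonneg (by linarith)]
      linarith
  · obtain ⟨P, hP, h⟩ := GG_deriv i
    obtain ⟨Q, hQ⟩ : Polynomial.X^2 ∣ Polynomial.X^(i+1) * P := by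
      rcases i with _ | i
      · obtain ⟨R, hR⟩ := hP rfl
        exact ⟨R, by rw [hR]; ring⟩
      · exact ⟨Polynomial.X^i * P, by ring⟩
    obtain ⟨B, hB, hB'⟩ := poly_bd (Polynomial.X^2 * Q)
    obtain ⟨D, hD, hD'⟩ := poly_bd Q
    have e : ∀ x : ℝ, 0 < x → x^(i+1) * ‖iteratedDeriv (i+1) GG x‖
        = |(Polynomial.X^2 * Q).eval x| * Real.exp (-x^2) := by
      intro x hx
      rw [h, ← hQ]
      simp only [Complex.norm_real, Real.norm_eq_abs, Polynomial.eval_mul, Polynomial.eval_pow,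
        Polynomial.eval_X, abs_mul, abs_pow, abs_of_pos hx, Real.abs_exp]
      ring
    refine ⟨B + D, by positivity, fun x hx => key x B D _ hx hB hD ?_ ?_⟩
    · rw [e x hx]; exact hB' x hx.le
    · rw [e x hx, Polynomial.eval_mul, abs_mul]
      have := mul_le_mul_of_nonneg_left (hD' x hx.le) (sq_nonneg x)
      simp only [Polynomial.eval_pow, Polynomial.eval_X, abs_pow, sq_abs]
      linarith

lemma prod_bd (f g : ℝ → ℂ) (l : ℝ) (hl : 0 < l) (N : ℕ) (a b : ℝ) (ha : 0 ≤ a)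
    (hf : ContDiffOn ℝ N f (Set.Ioi 0)) (hg : ContDiffOn ℝ N g (Set.Ioi 0))
    (hfa : ∀ i ≤ N, l^i * ‖iteratedDeriv i f l‖ ≤ a)
    (hgb : ∀ i ≤ N, l^i * ‖iteratedDeriv i g l‖ ≤ b) :
    ∀ i ≤ N, l^i * ‖iteratedDeriv i (fun x => f x * g x) l‖ ≤ 2^N * a * b := by
  intro i hi
  have hb : 0 ≤ b := le_trans (by positivity) (hgb 0 (Nat.zero_le _))
  have h := norm_iteratedFDerivWithin_mul_le hf hg (isOpen_Ioi.uniqueDiffOn) (x := l) hl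
    (n := i) (by exact_mod_cast hi)
  simp only [norm_iteratedFDerivWithin_eq_norm_iteratedDerivWithin,
    iteratedDerivWithin_of_isOpen isOpen_Ioi (show l ∈ Set.Ioi (0:ℝ) from hl)] at h
  calc _ ≤ l^i * _ := mul_le_mul_of_nonneg_left h (by positivity)
    _ = ∑ k ∈ Finset.range (i+1), (i.choose k : ℝ) * ((l^k * ‖iteratedDeriv k f l‖) *
          (l^(i-k) * ‖iteratedDeriv (i-k) g l‖)) := by
        rw [Finset.mul_sum]
        refine Finset.sum_congr rfl fun k hk => ?_
        have : l^i = l^k * l^(i-k) := by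
          rw [← pow_add]; congr 1; have := Finset.mem_range.1 hk; omega
        rw [this]; ring
    _ ≤ ∑ k ∈ Finset.range (i+1), (i.choose k : ℝ) * (a * b) := by
        refine Finset.sum_le_sum fun k hk => ?_
        have := Finset.mem_range.1 hk
        exact mul_le_mul_of_nonneg_left (mul_le_mul (hfa k (by omega)) (hgb _ (by omega))
          (by positivity) ha) (by positivity)
    _ = 2^i * (a * b) := by
        rw [← Finset.sum_mul]; congr 1; exact_mod_cast Nat.sum_range_choose i
    _ ≤ 2^N * (a * b) := by gcongr; norm_num
    _ = _ := by ring

lemma Gr_bd (J : ℕ) : ∃ B : ℝ, 0 ≤ B ∧ ∀ r : ℝ, 0 < r → ∀ l : ℝ, 0 < l → ∀ i ≤ J,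
    l^i * ‖iteratedDeriv i (fun x => GG (r * x)) l‖ ≤ B * (min 1 (r*l))^2 := by
  choose B hB h using GG_bd
  refine ⟨∑ i ∈ Finset.range (J+1), B i, Finset.sum_nonneg fun i _ => hB i, ?_⟩
  intro r hr l hl i hi
  have h1 := h i (r*l) (by positivity)
  have h2 : B i ≤ ∑ i ∈ Finset.range (J+1), B i :=
    Finset.single_le_sum (fun i _ => hB i) (Finset.mem_range.2 (by omega))
  rw [iteratedDeriv_comp_const_smul (GG_contDiff.of_le le_top)]
  calc _ = (r*l)^i * ‖iteratedDeriv i GG (r*l)‖ := by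
        simp only [norm_smul, norm_pow, Real.norm_eq_abs, abs_of_pos hr]; ring
    _ ≤ _ := h1
    _ ≤ _ := by gcongr

lemma pow_bd (J μ : ℕ) : ∃ B : ℝ, 0 ≤ B ∧ ∀ r : ℝ, 0 < r → ∀ l : ℝ, 0 < l → ∀ i ≤ J,
    l^i * ‖iteratedDeriv i (fun x => GG (r * x) ^ (μ+1)) l‖ ≤ B * (min 1 (r*l))^(2*(μ+1)) := by
  obtain ⟨D, hD, hD'⟩ := Gr_bd J
  induction μ with
  | zero => exact ⟨D, hD, by simpa using hD'⟩
  | succ μ ih =>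
    obtain ⟨B, hB, hB'⟩ := ih
    refine ⟨2^J * B * D, by positivity, fun r hr l hl i hi => ?_⟩
    have hc : ContDiff ℝ J fun x => GG (r*x) :=
      (GG_contDiff.of_le le_top).comp (by fun_prop)
    have hm : 0 ≤ min 1 (r*l) := by positivity
    have := prod_bd (fun x => GG (r * x) ^ (μ+1)) (fun x => GG (r*x)) l hl J _ _
      (by positivity) (hc.pow _).contDiffOn hc.contDiffOn (hB' r hr l hl) (hD' r hr l hl) i hi
    simp only [← pow_succ] at this
    refine this.trans (le_of_eq ?_)
    ring

theorem truncated_multiplier_derivative_bounds (μ J : ℕ) (hμ : 1 ≤ μ) :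
    ∃ C : ℝ, 0 < C ∧ ∀ r A : ℝ, 0 < r → 0 < A → ∀ m : ℝ → ℂ,
      ContDiffOn ℝ J m (Set.Ioi (0 : ℝ)) →
      (∀ l : ℝ, 0 < l → ∀ i : ℕ, i ≤ J →
        ‖iteratedDeriv i m l‖ ≤ A * l ^ (-(i : ℝ))) →
      ∀ l : ℝ, 0 < l → ∀ i : ℕ, i ≤ J →
        ‖iteratedDeriv i
            (fun x : ℝ => m x * (((1 - Real.exp (-(r ^ 2 * x ^ 2))) ^ μ : ℝ) : ℂ)) l‖ ≤
          C * A * l ^ (-(i : ℝ)) * (min 1 (r * l)) ^ (2 * μ) := by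
  obtain ⟨ν, rfl⟩ : ∃ ν, μ = ν + 1 := ⟨μ - 1, by omega⟩
  obtain ⟨B, hB, hB'⟩ := pow_bd J ν
  refine ⟨2^J * B + 1, by positivity, fun r A hr hA m hm hmA l hl i hi => ?_⟩
  have hc : ContDiff ℝ J fun x => GG (r*x) :=
    (GG_contDiff.of_le le_top).comp (by fun_prop)
  have hmin : 0 ≤ min 1 (r*l) := by positivity
  have e : (fun x : ℝ => m x * (((1 - Real.exp (-(r ^ 2 * x ^ 2))) ^ (ν+1) : ℝ) : ℂ))
      = fun x => m x * GG (r*x) ^ (ν+1) := by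
    funext x; simp [GG, mul_pow]
  have h := prod_bd m (fun x => GG (r * x) ^ (ν+1)) l hl J A _ hA.le hm (hc.pow _).contDiffOn
    (fun k hk => by
      have := hmA l hl k hk
      rw [Real.rpow_neg hl.le, Real.rpow_natCast, ← div_eq_mul_inv, le_div_iff₀ (by positivity)] at this
      linarith) (hB' r hr l hl) i hi
  rw [e, Real.rpow_neg hl.le, Real.rpow_natCast]
  have hp : 0 < l^i := by positivity
  have : (2^J * B + 1) * A * (l^i)⁻¹ * (min 1 (r * l)) ^ (2 * (ν+1))
     = ((2^J * B + 1) * A * (min 1 (r * l)) ^ (2 * (ν+1))) / l^i := by ring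
  rw [this, le_div_iff₀ hp]
  have : 0 ≤ A * (min 1 (r * l)) ^ (2 * (ν+1)) := by positivity
  linarith
end

section
/- Let $d \ge 3$, let $0 < \sigma \le \tfrac{d-2}{2}$, let $0 < s < 2$, let $c > 0$, and let $p$ satisfy $\max\{1, \tfrac{d}{d+s-\sigma}\} < p < \tfrac{d}{\sigma}$. Suppose $\{K_N\}_{N \in 2^{\mathbb{Z}}}$ is a family of measurable kernels on $\mathbb{R}^d \times \mathbb{R}^d$ such that for every $M > 0$ there is a constant $C_M$ with, for all $N \in 2^{\mathbb{Z}}$ and all $x, y \in \mathbb{R}^d\setminus\{0\}$: $|K_N(x,y)| \le C_M\, N^{d-2\sigma} (|x|\,|y|)^{-\sigma}$ whenever $|x|, |y| \le N^{-1}$; $|K_N(x,y)| \le C_M\, N^d (N|x|)^{-\sigma}(N|y|)^{-M}$ whenever $2|x| \le N^{-1} \le |y|$; $|K_N(x,y)| \le C_M\, N^d (N|y|)^{-\sigma}(N|x|)^{-M}$ whenever $2|y| \le N^{-1} \le |x|$; and $|K_N(x,y)| \le C_M\, N^{d-2}(|x|+|y|)^{-2} e^{-cN^2|x-y|^2}$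 whenever $|x|, |y| \ge \tfrac12 N^{-1}$. Then there is a constant $C$ such that for every measurable $f : \mathbb{R}^d \to \mathbb{C}$, $\left\|\int_{\mathbb{R}^d} \left(\sum_{N \in 2^{\mathbb{Z}}} N^s\, |K_N(x,y)|\right) |f(y)|\,dy\right\|_{L^p_x(\mathbb{R}^d)} \le C \left\|\,|y|^{-s} f(y)\,\right\|_{L^p_y(\mathbb{R}^d)}$. -/
open MeasureTheory
open scoped ENNReal

theorem schur_test {α : Type*} [MeasurableSpace α] (μ : Measure α) [SFinite μ]
    (k : α → α → ℝ≥0∞) (hk : Measurable (Function.uncurry k)) (h : α → ℝ≥0∞) (hh : Measurable h)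
    (h0 : ∀ᵐ x ∂μ, h x ≠ 0) (ht : ∀ᵐ x ∂μ, h x ≠ ∞) (p q : ℝ) (hpq : p.HolderConjugate q)
    (A B : ℝ≥0∞)
    (hA : ∀ᵐ x ∂μ, ∫⁻ y, k x y * h y ^ q ∂μ ≤ A * h x ^ q)
    (hB : ∀ᵐ y ∂μ, ∫⁻ x, k x y * h x ^ p ∂μ ≤ B * h y ^ p)
    (g : α → ℝ≥0∞) (hg : Measurable g) :
    ∫⁻ x, (∫⁻ y, k x y * g y ∂μ) ^ p ∂μ ≤ A ^ (p / q) * B * ∫⁻ y, g y ^ p ∂μ := by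
  have hp := hpq.pos
  have hq := hpq.symm.pos
  have hkx : ∀ x, Measurable (k x) := fun x => hk.comp measurable_prodMk_left
  have step : ∀ᵐ x ∂μ, (∫⁻ y, k x y * g y ∂μ) ^ p ≤
      A ^ (p / q) * (h x ^ p * ∫⁻ y, k x y * ((h y)⁻¹ * g y) ^ p ∂μ) := by
    filter_upwards [hA] with x hx
    have e1 : ∫⁻ y, k x y * g y ∂μ =
        ∫⁻ y, ((fun y => k x y ^ (1/q) * h y) * (fun y => k x y ^ (1/p) * ((h y)⁻¹ * g y))) y ∂μ := by
      apply lintegral_congr_ae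
      filter_upwards [h0, ht] with y h0 ht
      simp only [Pi.mul_apply]
      have : k x y = k x y ^ (1/q) * k x y ^ (1/p) := by
        rw [← ENNReal.rpow_add_of_nonneg _ _ (by positivity) (by positivity)]
        have := hpq.symm.inv_add_inv_eq_one
        simp only [one_div, this, ENNReal.rpow_one]
      calc k x y * g y = (k x y ^ (1/q) * k x y ^ (1/p)) * (h y * (h y)⁻¹) * g y := by
            rw [← this, ENNReal.mul_inv_cancel h0 ht, mul_one]
        _ = _ := by ring
    have e2 := ENNReal.lintegral_mul_le_Lp_mul_Lq μ hpq.symm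
      (f := fun y => k x y ^ (1/q) * h y) (g := fun y => k x y ^ (1/p) * ((h y)⁻¹ * g y))
      (((hkx x).pow_const _).mul hh).aemeasurable
      (((hkx x).pow_const _).mul (hh.inv.mul hg)).aemeasurable
    rw [← e1] at e2
    have e3 : ∀ y, (k x y ^ (1/q) * h y) ^ q = k x y * h y ^ q := fun y => by
      rw [ENNReal.mul_rpow_of_nonneg _ _ hq.le, ← ENNReal.rpow_mul, one_div_mul_cancel hq.ne',
        ENNReal.rpow_one]
    have e4 : ∀ y, (k x y ^ (1/p) * ((h y)⁻¹ * g y)) ^ p = k x y * ((h y)⁻¹ * g y) ^ p := fun y => by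
      rw [ENNReal.mul_rpow_of_nonneg _ _ hp.le, ← ENNReal.rpow_mul, one_div_mul_cancel hp.ne',
        ENNReal.rpow_one]
    simp only [e3, e4] at e2
    calc (∫⁻ y, k x y * g y ∂μ) ^ p ≤ ((A * h x ^ q) ^ (1/q) *
          (∫⁻ y, k x y * ((h y)⁻¹ * g y) ^ p ∂μ) ^ (1/p)) ^ p := by
            gcongr
            refine e2.trans ?_
            gcongr
      _ = _ := by
        rw [ENNReal.mul_rpow_of_nonneg _ _ hp.le, ← ENNReal.rpow_mul, ← ENNReal.rpow_mul,
          one_div_mul_cancel hp.ne', ENNReal.rpow_one,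
          ENNReal.mul_rpow_of_nonneg _ _ (by positivity), ← ENNReal.rpow_mul]
        have : q * (1 / q * p) = p := by field_simp
        rw [this, mul_assoc]
        congr 2
        ring
  have m1 : Measurable (fun z : α × α => k z.1 z.2 * ((h z.2)⁻¹ * g z.2) ^ p) := by
    have : Measurable (fun z : α × α => k z.1 z.2) := hk
    fun_prop
  calc _ ≤ ∫⁻ x, A ^ (p / q) * (h x ^ p * ∫⁻ y, k x y * ((h y)⁻¹ * g y) ^ p ∂μ) ∂μ :=
        lintegral_mono_ae step
    _ = A ^ (p / q) * ∫⁻ x, (h x ^ p * ∫⁻ y, k x y * ((h y)⁻¹ * g y) ^ p ∂μ) ∂μ := by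
        rw [lintegral_const_mul]
        have := m1.lintegral_prod_right' (ν := μ)
        fun_prop
    _ = A ^ (p / q) * ∫⁻ x, ∫⁻ y, h x ^ p * (k x y * ((h y)⁻¹ * g y) ^ p) ∂μ ∂μ := by
        congr 1
        apply lintegral_congr
        intro x
        rw [lintegral_const_mul]
        exact m1.comp measurable_prodMk_left
    _ = A ^ (p / q) * ∫⁻ y, ∫⁻ x, h x ^ p * (k x y * ((h y)⁻¹ * g y) ^ p) ∂μ ∂μ := by
        rw [lintegral_lintegral_swap]
        apply Measurable.aemeasurable
        have : Measurable (fun z : α × α => h z.1 ^ p * (k z.1 z.2 * ((h z.2)⁻¹ * g z.2) ^ p)) := by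
          fun_prop
        exact this
    _ ≤ A ^ (p / q) * ∫⁻ y, B * g y ^ p ∂μ := by
        gcongr 1
        apply lintegral_mono_ae
        filter_upwards [h0, ht, hB] with y h0 ht hB
        calc _ = ∫⁻ x, ((h y)⁻¹ * g y) ^ p * (k x y * h x ^ p) ∂μ := by
              apply lintegral_congr; intro x; ring
          _ = ((h y)⁻¹ * g y) ^ p * ∫⁻ x, (k x y * h x ^ p) ∂μ := by
              rw [lintegral_const_mul]
              have : Measurable (fun x => k x y) := hk.comp measurable_prodMk_right
              fun_prop
          _ ≤ ((h y)⁻¹ * g y) ^ p * (B * h y ^ p) := by gcongr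
          _ = B * ((h y)⁻¹ * g y * h y) ^ p := by
              rw [ENNReal.mul_rpow_of_nonneg _ (h y) hp.le]; ring
          _ = B * g y ^ p := by
              rw [mul_right_comm, ENNReal.inv_mul_cancel h0 ht, one_mul]
    _ = _ := by
        rw [lintegral_const_mul _ (by fun_prop), mul_assoc]

theorem polar_aux (d : ℕ) (hd : 3 ≤ d) (f : ℝ → ℝ) (hf : ∀ r, 0 ≤ r → 0 ≤ f r) (v : ℝ)
    (hi : IntegrableOn (fun y => y ^ (d - 1) * f y) (Set.Ioi 0))
    (hv : ∫ y in Set.Ioi (0:ℝ), y ^ (d - 1) * f y = v) :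
    ∫⁻ x : EuclideanSpace ℝ (Fin d), ENNReal.ofReal (f ‖x‖) =
      ENNReal.ofReal (d * (volume.real (Metric.ball (0 : EuclideanSpace ℝ (Fin d)) 1)) * v) := by
  have : Nontrivial (EuclideanSpace ℝ (Fin d)) := by
    have : Nonempty (Fin d) := ⟨⟨0, by omega⟩⟩
    infer_instance
  have hint : Integrable (fun x : EuclideanSpace ℝ (Fin d) => f ‖x‖) volume := by
    rw [integrable_fun_norm_addHaar]
    simpa using hi
  rw [← ofReal_integral_eq_lintegral_ofReal hint (Filter.Eventually.of_forall fun x => hf _ (norm_nonneg _)),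
    integral_fun_norm_addHaar]
  simp only [finrank_euclideanSpace, Fintype.card_fin, smul_eq_mul, nsmul_eq_mul, hv]
  congr 1
  ring

theorem ball_aux (d : ℕ) (hd : 3 ≤ d) (e : ℝ) (he : 0 < d + e) :
    ∃ C : ℝ, 0 ≤ C ∧ ∀ R : ℝ, 0 < R →
      ∫⁻ x : EuclideanSpace ℝ (Fin d), ENNReal.ofReal (if ‖x‖ ≤ R then ‖x‖ ^ e else 0) ≤
        ENNReal.ofReal (C * R ^ (d + e)) := by
  refine ⟨d * (volume.real (Metric.ball (0 : EuclideanSpace ℝ (Fin d)) 1)) * (d + e)⁻¹, 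
    by positivity, fun R hR => ?_⟩
  have key : ∀ y ∈ Set.Ioi (0:ℝ), y ^ (d - 1) * (if y ≤ R then y ^ e else 0) =
      (Set.Iic R).indicator (fun y => y ^ (d + e - 1)) y := by
    intro y hy
    have hy : 0 < y := hy
    by_cases h : y ≤ R
    · simp only [h, if_true, Set.indicator, Set.mem_Iic]
      rw [← Real.rpow_natCast, ← Real.rpow_add hy]
      congr 1
      push_cast [show 1 ≤ d by omega]; ring
    · simp [h]
  have hset : Set.Ioi (0:ℝ) ∩ Set.Iic R = Set.Ioc 0 R := by ext; simp
  refine (polar_aux d hd (fun r => if r ≤ R then r ^ e else 0) ?_ (R ^ (d+e) / (d+e)) ?_ ?_).le.trans ?_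
  · intro r hr; split_ifs <;> positivity
  · rw [integrableOn_congr_fun key measurableSet_Ioi, IntegrableOn, integrable_indicator_iff measurableSet_Iic,
      IntegrableOn, Measure.restrict_restrict measurableSet_Iic, Set.inter_comm, hset]
    exact (intervalIntegrable_iff_integrableOn_Ioc_of_le hR.le).1
      (intervalIntegral.intervalIntegrable_rpow' (by linarith))
  · rw [setIntegral_congr_fun measurableSet_Ioi key, setIntegral_indicator measurableSet_Iic, hset,
      ← intervalIntegral.integral_of_le hR.le, integral_rpow (Or.inl (by linarith))]
    rw [sub_add_cancel, Real.zero_rpow he.ne']; simp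
  · apply le_of_eq; congr 1; field_simp

theorem out_aux (d : ℕ) (hd : 3 ≤ d) (e : ℝ) (he : d + e < 0) :
    ∃ C : ℝ, 0 ≤ C ∧ ∀ R : ℝ, 0 < R →
      ∫⁻ x : EuclideanSpace ℝ (Fin d), ENNReal.ofReal (if R ≤ ‖x‖ then ‖x‖ ^ e else 0) ≤
        ENNReal.ofReal (C * R ^ (d + e)) := by
  refine ⟨d * (volume.real (Metric.ball (0 : EuclideanSpace ℝ (Fin d)) 1)) * (-(d + e))⁻¹, 
    mul_nonneg (by positivity) (inv_nonneg.2 (by linarith)), fun R hR => ?_⟩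
  have key : ∀ y ∈ Set.Ioi (0:ℝ), y ^ (d - 1) * (if R ≤ y then y ^ e else 0) =
      (Set.Ici R).indicator (fun y => y ^ (d + e - 1)) y := by
    intro y hy
    have hy : 0 < y := hy
    by_cases h : R ≤ y
    · simp only [h, if_true, Set.indicator, Set.mem_Ici]
      rw [← Real.rpow_natCast, ← Real.rpow_add hy]
      congr 1
      push_cast [show 1 ≤ d by omega]; ring
    · simp [h]
  have hset : Set.Ioi (0:ℝ) ∩ Set.Ici R = Set.Ici R := by
    ext; simp; intro h; linarith
  refine (polar_aux d hd (fun r => if R ≤ r then r ^ e else 0) ?_ (- R ^ (d+e) / (d+e)) ?_ ?_).le.trans ?_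
  · intro r hr; split_ifs <;> positivity
  · rw [integrableOn_congr_fun key measurableSet_Ioi, IntegrableOn, integrable_indicator_iff measurableSet_Ici,
      IntegrableOn, Measure.restrict_restrict measurableSet_Ici, Set.inter_comm, hset]
    rw [← IntegrableOn, integrableOn_Ici_iff_integrableOn_Ioi]
    exact integrableOn_Ioi_rpow_of_lt (by linarith) hR
  · rw [setIntegral_congr_fun measurableSet_Ioi key, setIntegral_indicator measurableSet_Ici, hset,
      integral_Ici_eq_integral_Ioi, integral_Ioi_rpow_of_lt (by linarith) hR]
    rw [sub_add_cancel]
  · apply le_of_eq; congr 1; 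
    have := he.ne
    field_simp

/-- sum -/
theorem sum_aux (s : ℝ) (hs : 0 < s) : ∃ C : ℝ, 0 ≤ C ∧ ∀ m : ℝ, 0 < m →
    ∑' k : ℤ, ENNReal.ofReal (min (((2:ℝ) ^ k * m) ^ s) (((2:ℝ) ^ k * m) ^ (-s))) ≤
      ENNReal.ofReal C := by
  have hr0 : (0:ℝ) ≤ 2 ^ (-s) := by positivity
  have hr1 : (2:ℝ) ^ (-s) < 1 := Real.rpow_lt_one_of_one_lt_of_neg (by norm_num) (by linarith)
  have hsum : Summable (fun n : ℤ => (2:ℝ) ^ s * ((2:ℝ) ^ (-s)) ^ n.natAbs) := by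
    apply Summable.mul_left
    apply Summable.of_nat_of_neg
    · simpa using summable_geometric_of_lt_one hr0 hr1
    · simpa using summable_geometric_of_lt_one hr0 hr1
  refine ⟨∑' n : ℤ, (2:ℝ) ^ s * ((2:ℝ) ^ (-s)) ^ n.natAbs, tsum_nonneg fun n => by positivity, ?_⟩
  intro m hm
  obtain ⟨j, hj1, hj2⟩ := exists_mem_Ico_zpow hm (one_lt_two)
  rw [ENNReal.ofReal_tsum_of_nonneg (fun n => by positivity) hsum,
    ← (Equiv.addRight j).tsum_eq (fun n : ℤ => ENNReal.ofReal ((2:ℝ) ^ s * ((2:ℝ) ^ (-s)) ^ n.natAbs))]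
  apply ENNReal.tsum_le_tsum
  intro k
  apply ENNReal.ofReal_le_ofReal
  simp only [Equiv.coe_addRight]
  have h1 : (2:ℝ) ^ (k + j) ≤ 2 ^ k * m := by
    rw [zpow_add₀ two_ne_zero]; gcongr
  have h2 : (2:ℝ) ^ k * m ≤ 2 * 2 ^ (k + j) := by
    calc (2:ℝ) ^ k * m ≤ 2 ^ k * 2 ^ (j + 1) := by gcongr
      _ = _ := by rw [zpow_add₀ two_ne_zero, zpow_add₀ two_ne_zero]; ring
  generalize k + j = n at *
  rcases le_total 0 n with h | h
  · refine (min_le_right _ _).trans ?_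
    calc ((2:ℝ) ^ k * m) ^ (-s) ≤ ((2:ℝ) ^ n) ^ (-s) :=
          Real.rpow_le_rpow_of_nonpos (by positivity) h1 (by linarith)
      _ = ((2:ℝ) ^ (-s)) ^ n.natAbs := by
          lift n to ℕ using h
          simp only [zpow_natCast, Int.natAbs_natCast]
          rw [← Real.rpow_natCast, ← Real.rpow_natCast, ← Real.rpow_mul (by norm_num), ← Real.rpow_mul (by norm_num), mul_comm]
      _ ≤ _ := by
          apply le_mul_of_one_le_left (by positivity)
          exact Real.one_le_rpow (by norm_num) hs.le
  · refine (min_le_left _ _).trans ?_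
    calc ((2:ℝ) ^ k * m) ^ (s) ≤ (2 * (2:ℝ) ^ n) ^ (s) :=
          Real.rpow_le_rpow (by positivity) h2 (by linarith)
      _ = _ := by
          obtain ⟨l, rfl⟩ : ∃ l : ℕ, n = -l := ⟨n.natAbs, by omega⟩
          rw [Real.mul_rpow (by norm_num) (by positivity)]
          congr 1
          simp only [Int.natAbs_neg, Int.natAbs_natCast, zpow_neg, zpow_natCast]
          rw [← Real.rpow_natCast, ← Real.rpow_natCast, ← Real.rpow_mul (by norm_num), ← Real.rpow_neg (by norm_num), ← Real.rpow_mul (by norm_num)]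
          congr 1; ring

noncomputable def kA (d σ a b : ℝ) : ℝ := if a ≤ b then b ^ (-(d-σ)) * a ^ (-σ) else 0
noncomputable def kB (d σ s a b : ℝ) : ℝ := if b ≤ a then a ^ (-(s+d-σ)) * b ^ (s-σ) else 0
noncomputable def kE (d s a b r : ℝ) : ℝ :=
  if a / 2 ≤ b ∧ b ≤ 2 * a then r ^ (-(s+d-2)) * a ^ (s-2) else 0
noncomputable def ph (s t : ℝ) : ℝ := min (t ^ s) (t ^ (-s))

theorem kA_nonneg {d σ a b : ℝ} (ha : 0 ≤ a) (hb : 0 ≤ b) : 0 ≤ kA d σ a b := by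
  unfold kA; split_ifs <;> positivity
theorem kB_nonneg {d σ s a b : ℝ} (ha : 0 ≤ a) (hb : 0 ≤ b) : 0 ≤ kB d σ s a b := by
  unfold kB; split_ifs <;> positivity
theorem kE_nonneg {d s a b r : ℝ} (ha : 0 ≤ a) (hr : 0 ≤ r) : 0 ≤ kE d s a b r := by
  unfold kE; split_ifs <;> positivity
theorem ph_nonneg {s t : ℝ} (ht : 0 ≤ t) : 0 ≤ ph s t := by
  unfold ph; positivity

theorem ph_le {s t e : ℝ} (ht : 0 < t) (hs : 0 < s) (h1 : t ≤ 1) (he : s ≤ e) : t ^ e ≤ ph s t := by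
  refine le_min (Real.rpow_le_rpow_of_exponent_ge ht h1 he)
    (Real.rpow_le_rpow_of_exponent_ge ht h1 (by linarith))
theorem ph_ge {s t e : ℝ} (hs : 0 < s) (h1 : 1 ≤ t) (he : e ≤ -s) : t ^ e ≤ ph s t := by
  refine le_min (Real.rpow_le_rpow_of_exponent_le h1 (by linarith))
    (Real.rpow_le_rpow_of_exponent_le h1 (by linarith))

theorem exp_of_pos {a : ℝ} (ha : 0 < a) : ∃ t, a = Real.exp t := ⟨Real.log a, (Real.exp_log ha).symm⟩

theorem R1a {d σ s a b N : ℝ} (ha : 0 < a) (hb : 0 < b) (hN : 0 < N) (hs : 0 < s) (hdσ : 2 * σ ≤ d)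
    (hab : a ≤ b) (h : N * b ≤ 1) :
    N ^ s * (N ^ (d - 2 * σ) * (a * b) ^ (-σ)) * b ^ s ≤ kA d σ a b * ph s (N * b) := by
  rw [kA, if_pos hab]
  have : N ^ s * (N ^ (d - 2 * σ) * (a * b) ^ (-σ)) * b ^ s =
      b ^ (-(d-σ)) * a ^ (-σ) * (N * b) ^ (s + d - 2 * σ) := by
    obtain ⟨α, rfl⟩ := exp_of_pos ha
    obtain ⟨β, rfl⟩ := exp_of_pos hb
    obtain ⟨n, rfl⟩ := exp_of_pos hN
    simp only [← Real.exp_mul, ← Real.exp_add]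
    congr 1; ring
  rw [this]
  gcongr
  exact ph_le (by positivity) hs h (by linarith)

theorem R1b {d σ s a b N : ℝ} (ha : 0 < a) (hb : 0 < b) (hN : 0 < N) (hs : 0 < s) (hdσ : 2 * σ ≤ d)
    (hab : b ≤ a) (h : N * a ≤ 1) :
    N ^ s * (N ^ (d - 2 * σ) * (a * b) ^ (-σ)) * b ^ s ≤ kB d σ s a b * ph s (N * a) := by
  rw [kB, if_pos hab]
  have : N ^ s * (N ^ (d - 2 * σ) * (a * b) ^ (-σ)) * b ^ s =
      a ^ (-(s+d-σ)) * b ^ (s-σ) * (N * a) ^ (s + d - 2 * σ) := by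
    obtain ⟨α, rfl⟩ := exp_of_pos ha
    obtain ⟨β, rfl⟩ := exp_of_pos hb
    obtain ⟨n, rfl⟩ := exp_of_pos hN
    simp only [← Real.exp_mul, ← Real.exp_add]
    congr 1; ring
  rw [this]
  gcongr
  exact ph_le (by positivity) hs h (by linarith)

theorem R2 {d σ s a b N : ℝ} (ha : 0 < a) (hb : 0 < b) (hN : 0 < N) (hs : 0 < s)
    (hab : a ≤ b) (h : 1 ≤ N * b) :
    N ^ s * (N ^ d * (N * a) ^ (-σ) * (N * b) ^ (-(2 * s + d - σ))) * b ^ s ≤ 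
      kA d σ a b * ph s (N * b) := by
  rw [kA, if_pos hab]
  have : N ^ s * (N ^ d * (N * a) ^ (-σ) * (N * b) ^ (-(2 * s + d - σ))) * b ^ s =
      b ^ (-(d-σ)) * a ^ (-σ) * (N * b) ^ (-s) := by
    obtain ⟨α, rfl⟩ := exp_of_pos ha
    obtain ⟨β, rfl⟩ := exp_of_pos hb
    obtain ⟨n, rfl⟩ := exp_of_pos hN
    simp only [← Real.exp_mul, ← Real.exp_add]
    congr 1; ring
  rw [this]
  gcongr
  exact ph_ge hs h le_rfl

theorem R3 {d σ s a b N : ℝ} (ha : 0 < a) (hb : 0 < b) (hN : 0 < N) (hs : 0 < s)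
    (hab : b ≤ a) (h : 1 ≤ N * a) :
    N ^ s * (N ^ d * (N * b) ^ (-σ) * (N * a) ^ (-(2 * s + d - σ))) * b ^ s ≤ 
      kB d σ s a b * ph s (N * a) := by
  rw [kB, if_pos hab]
  have : N ^ s * (N ^ d * (N * b) ^ (-σ) * (N * a) ^ (-(2 * s + d - σ))) * b ^ s =
      a ^ (-(s+d-σ)) * b ^ (s-σ) * (N * a) ^ (-s) := by
    obtain ⟨α, rfl⟩ := exp_of_pos ha
    obtain ⟨β, rfl⟩ := exp_of_pos hb
    obtain ⟨n, rfl⟩ := exp_of_pos hN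
    simp only [← Real.exp_mul, ← Real.exp_add]
    congr 1; ring
  rw [this]
  gcongr
  exact ph_ge hs h le_rfl

theorem gauss (d s c : ℝ) (hs : 0 < s) (hc : 0 < c) (hd : 2 ≤ d) : ∃ C : ℝ, 0 ≤ C ∧ ∀ t : ℝ, 0 < t →
    t ^ (s + d - 2) * Real.exp (-c * t ^ 2) ≤ C * ph s t := by
  obtain ⟨n, hn⟩ := exists_nat_ge (2 * s + d - 2)
  refine ⟨max 1 (n.factorial / c ^ n), by positivity, fun t ht => ?_⟩
  rcases le_total t 1 with h | h
  · calc t ^ (s + d - 2) * Real.exp (-c * t ^ 2) ≤ ph s t * 1 := by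
          gcongr
          · exact ph_nonneg ht.le
          · exact ph_le ht hs h (by linarith)
          · apply Real.exp_le_one_iff.2
            nlinarith [mul_pos hc (pow_pos ht 2)]
      _ ≤ _ := by
          rw [mul_comm]
          gcongr
          · exact ph_nonneg ht.le
          · exact le_max_left _ _
  · have h1 := Real.pow_div_factorial_le_exp (c * t ^ 2) (by positivity) n
    have h2 : Real.exp (-c * t ^ 2) ≤ n.factorial / c ^ n * t ^ (-(2 * n : ℝ)) := by
      rw [neg_mul, Real.exp_neg]
      have : n.factorial / c ^ n * t ^ (-(2 * n : ℝ)) = ((c * t ^ 2) ^ n / n.factorial)⁻¹ := by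
        rw [Real.rpow_neg ht.le, show (2 * n : ℝ) = ((2 * n : ℕ) : ℝ) by push_cast; ring,
          Real.rpow_natCast, mul_pow, ← pow_mul]
        field_simp
      rw [this]
      gcongr
    calc t ^ (s + d - 2) * Real.exp (-c * t ^ 2) 
        ≤ t ^ (s + d - 2) * (n.factorial / c ^ n * t ^ (-(2 * n : ℝ))) := by gcongr
      _ = n.factorial / c ^ n * t ^ (s + d - 2 - 2 * n) := by
          rw [sub_eq_add_neg _ (2 * n : ℝ), Real.rpow_add ht]; ring
      _ ≤ _ := by
          gcongr
          · exact le_max_right _ _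
          · refine ph_ge hs h ?_
            have : (0:ℝ) ≤ n := by positivity
            linarith

theorem E0_le {d σ s a b r : ℝ} (ha : 0 < a) (hb : 0 < b) (hr : 0 < r) (hs : 0 < s) (hd : 2 ≤ d)
    (hσ : 0 < σ) (h1 : a ≤ b + r) (h2 : b ≤ a + r) :
    r ^ (-(s+d-2)) * b ^ s / (a + b) ^ 2 ≤
      2 ^ (s+d-2) * (kA d σ a b + kB d σ s a b + kE d s a b r) := by
  have nA := kA_nonneg (d := d) (σ := σ) ha.le hb.le
  have nB := kB_nonneg (d := d) (σ := σ) (s := s) ha.le hb.le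
  have nE := kE_nonneg (d := d) (s := s) (b := b) ha.le hr.le
  have e2 : ∀ t : ℝ, 0 < t → (t ^ 2)⁻¹ = t ^ (-2 : ℝ) := fun t ht => by
    rw [Real.rpow_neg ht.le]; norm_num
  have half : ∀ t : ℝ, 0 < t → (t / 2) ^ (-(s+d-2)) = 2 ^ (s+d-2) * t ^ (-(s+d-2)) := fun t ht => by
    rw [Real.div_rpow ht.le (by norm_num), Real.rpow_neg (by norm_num : (0:ℝ) ≤ 2), div_inv_eq_mul,
      mul_comm]
  by_cases c1 : 2 * b ≤ a
  · calc r ^ (-(s+d-2)) * b ^ s / (a + b) ^ 2 ≤ (a/2) ^ (-(s+d-2)) * b ^ s / a ^ 2 := by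
          gcongr ?_ * _ / ?_ ^ 2
          · exact Real.rpow_le_rpow_of_nonpos (by positivity) (by linarith) (by linarith)
          · linarith
      _ = 2 ^ (s+d-2) * (a ^ (-(s+d-σ)) * b ^ (s-σ)) * (b ^ σ * a ^ (-σ)) := by
          rw [half a ha, div_eq_mul_inv, e2 a ha]
          have : a ^ (-(s+d-2)) * b ^ s * a ^ (-2:ℝ) =
            (a ^ (-(s+d-σ)) * b ^ (s-σ)) * (b ^ σ * a ^ (-σ)) := by
            obtain ⟨α, rfl⟩ := exp_of_pos ha
            obtain ⟨β, rfl⟩ := exp_of_pos hb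
            simp only [← Real.exp_mul, ← Real.exp_add]
            congr 1; ring
          rw [mul_assoc, mul_assoc, ← mul_assoc (a ^ _), this]; ring
      _ ≤ 2 ^ (s+d-2) * (a ^ (-(s+d-σ)) * b ^ (s-σ)) * 1 := by
          gcongr
          rw [Real.rpow_neg ha.le, ← div_eq_mul_inv]
          apply div_le_one_of_le₀ _ (by positivity)
          apply Real.rpow_le_rpow hb.le (by linarith) hσ.le
      _ = 2 ^ (s+d-2) * kB d σ s a b := by rw [kB, if_pos (by linarith), mul_one]
      _ ≤ _ := by gcongr; linarith
  by_cases c2 : 2 * a ≤ b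
  · calc r ^ (-(s+d-2)) * b ^ s / (a + b) ^ 2 ≤ (b/2) ^ (-(s+d-2)) * b ^ s / b ^ 2 := by
          gcongr ?_ * _ / ?_ ^ 2
          · exact Real.rpow_le_rpow_of_nonpos (by positivity) (by linarith) (by linarith)
          · linarith
      _ = 2 ^ (s+d-2) * (b ^ (-(d-σ)) * a ^ (-σ)) * (a ^ σ * b ^ (-σ)) := by
          rw [half b hb, div_eq_mul_inv, e2 b hb]
          have : b ^ (-(s+d-2)) * b ^ s * b ^ (-2:ℝ) =
            (b ^ (-(d-σ)) * a ^ (-σ)) * (a ^ σ * b ^ (-σ)) := by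
            obtain ⟨α, rfl⟩ := exp_of_pos ha
            obtain ⟨β, rfl⟩ := exp_of_pos hb
            simp only [← Real.exp_mul, ← Real.exp_add]
            congr 1; ring
          rw [mul_assoc, mul_assoc, ← mul_assoc (b ^ _), this]; ring
      _ ≤ 2 ^ (s+d-2) * (b ^ (-(d-σ)) * a ^ (-σ)) * 1 := by
          gcongr
          rw [Real.rpow_neg hb.le, ← div_eq_mul_inv]
          apply div_le_one_of_le₀ _ (by positivity)
          apply Real.rpow_le_rpow ha.le (by linarith) hσ.le
      _ = 2 ^ (s+d-2) * kA d σ a b := by rw [kA, if_pos (by linarith), mul_one]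
      _ ≤ _ := by gcongr; linarith
  · push Not at c1 c2
    calc r ^ (-(s+d-2)) * b ^ s / (a + b) ^ 2 ≤ r ^ (-(s+d-2)) * (2 * a) ^ s / a ^ 2 := by
          gcongr ; linarith
      _ = 2 ^ s * (r ^ (-(s+d-2)) * a ^ (s-2)) := by
          rw [div_eq_mul_inv, e2 a ha, Real.mul_rpow (by norm_num) ha.le, sub_eq_add_neg s,
            Real.rpow_add ha]; ring
      _ = 2 ^ s * kE d s a b r := by rw [kE, if_pos ⟨by linarith, by linarith⟩]
      _ ≤ _ := by
          gcongr
          · norm_num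
          · linarith
          · linarith

theorem ptw (d : ℕ) (hd : 3 ≤ d) (σ s c CM : ℝ) (hσ0 : 0 < σ) (hσ : σ ≤ ((d : ℝ) - 2) / 2)
    (hs : 0 < s) (hc : 0 < c) (hCM : 0 < CM) :
    ∃ C : ℝ, 0 ≤ C ∧ ∀ N a b r kv : ℝ, 0 < N → 0 < a → 0 < b → 0 < r → a ≤ b + r → b ≤ a + r →
      (a ≤ N⁻¹ ∧ b ≤ N⁻¹ → kv ≤ CM * N ^ ((d:ℝ) - 2 * σ) * (a * b) ^ (-σ)) →
      (2 * a ≤ N⁻¹ ∧ N⁻¹ ≤ b → kv ≤ CM * N ^ d * (N * a) ^ (-σ) * (N * b) ^ (-(2 * s + d - σ))) →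
      (2 * b ≤ N⁻¹ ∧ N⁻¹ ≤ a → kv ≤ CM * N ^ d * (N * b) ^ (-σ) * (N * a) ^ (-(2 * s + d - σ))) →
      (N⁻¹ / 2 ≤ a ∧ N⁻¹ / 2 ≤ b → kv ≤ CM * N ^ ((d:ℝ) - 2) / (a + b) ^ 2 *
        Real.exp (-c * N ^ 2 * r ^ 2)) →
      N ^ s * kv ≤ C * ((kA d σ a b + kB d σ s a b + kE d s a b r) * b ^ (-s)) * 
        (ph s (N * a) + ph s (N * b) + ph s (N * r)) := by
  have hd' : (3:ℝ) ≤ d := by exact_mod_cast hd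
  obtain ⟨G, hG0, hG⟩ := gauss d s c hs hc (by linarith)
  refine ⟨CM * max 1 (G * 2 ^ (s + d - 2)), by positivity, ?_⟩
  intro N a b r kv hN ha hb hr h1 h2 H1 H2 H3 H4
  have nA := kA_nonneg (d := d) (σ := σ) ha.le hb.le
  have nB := kB_nonneg (d := d) (σ := σ) (s := s) ha.le hb.le
  have nE := kE_nonneg (d := d) (s := s) (b := b) ha.le hr.le
  have pa := ph_nonneg (s := s) (t := N * a) (by positivity)
  have pb := ph_nonneg (s := s) (t := N * b) (by positivity)
  have pr := ph_nonneg (s := s) (t := N * r) (by positivity)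
  set P := ph s (N * a) + ph s (N * b) + ph s (N * r) with hP
  set k := kA d σ a b + kB d σ s a b + kE d s a b r with hk
  have hk0 : 0 ≤ k := by positivity
  have hP0 : 0 ≤ P := by positivity
  suffices hh : ∃ u, kv ≤ CM * u ∧ N ^ s * u * b ^ s ≤ max 1 (G * 2 ^ (s + d - 2)) * (k * P) by
    obtain ⟨u, hu1, hu2⟩ := hh
    have e : b ^ s * b ^ (-s) = 1 := by rw [← Real.rpow_add hb]; simp
    calc N ^ s * kv ≤ N ^ s * (CM * u) := by gcongr
      _ = CM * (N ^ s * u * b ^ s) * b ^ (-s) := by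
          linear_combination (-(N ^ s * (CM * u))) * e
      _ ≤ CM * (max 1 (G * 2 ^ (s + d - 2)) * (k * P)) * b ^ (-s) := by gcongr
      _ = _ := by ring
  have fin : ∀ v, v ≤ k * P → v ≤ max 1 (G * 2 ^ (s + d - 2)) * (k * P) := fun v hv =>
    hv.trans (le_mul_of_one_le_left (by positivity) (le_max_left _ _))
  have hle : ∀ t, t ≤ N⁻¹ → N * t ≤ 1 := fun t ht => by
    calc N * t ≤ N * N⁻¹ := by gcongr
      _ = 1 := mul_inv_cancel₀ hN.ne'
  have hge : ∀ t, N⁻¹ ≤ t → 1 ≤ N * t := fun t ht => by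
    calc 1 = N * N⁻¹ := (mul_inv_cancel₀ hN.ne').symm
      _ ≤ N * t := by gcongr
  have fA : kA d σ a b * ph s (N * b) ≤ k * P := by
    apply mul_le_mul <;> first | assumption | linarith
  have fB : kB d σ s a b * ph s (N * a) ≤ k * P := by
    apply mul_le_mul <;> first | assumption | linarith
  have hNi : 0 < N⁻¹ := by positivity
  by_cases c1 : a ≤ N⁻¹ ∧ b ≤ N⁻¹
  · refine ⟨_, (H1 c1).trans_eq (mul_assoc _ _ _), fin _ ?_⟩
    rcases le_total a b with h | h
    · exact (R1a ha hb hN hs (by linarith) h (hle _ c1.2)).trans fA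
    · exact (R1b ha hb hN hs (by linarith) h (hle _ c1.1)).trans fB
  by_cases c4 : N⁻¹ / 2 ≤ a ∧ N⁻¹ / 2 ≤ b
  · refine ⟨N ^ ((d:ℝ) - 2) / (a + b) ^ 2 * Real.exp (-c * N ^ 2 * r ^ 2), (H4 c4).trans_eq (by ring), ?_⟩
    have e : N ^ s * N ^ ((d:ℝ) - 2) = (N * r) ^ (s + d - 2) * r ^ (-(s + d - 2)) := by
      obtain ⟨α, rfl⟩ := exp_of_pos hr
      obtain ⟨n, rfl⟩ := exp_of_pos hN
      simp only [← Real.exp_mul, ← Real.exp_add]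
      congr 1; ring
    calc _ = ((N * r) ^ (s + d - 2) * Real.exp (-c * (N * r) ^ 2)) * (r ^ (-(s+d-2)) * b ^ s / (a + b) ^ 2) := by
          rw [show -c * (N * r) ^ 2 = -c * N ^ 2 * r ^ 2 by ring]
          linear_combination (Real.exp (-c * N ^ 2 * r ^ 2) * b ^ s / (a + b) ^ 2) * e
      _ ≤ (G * ph s (N * r)) * (2 ^ (s + d - 2) * k) := by
          refine mul_le_mul (hG _ (by positivity))
            (E0_le ha hb hr hs (by linarith) hσ0 h1 h2) (by positivity) (by positivity)
      _ = (G * 2 ^ (s + d - 2)) * (k * ph s (N * r)) := by ring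
      _ ≤ _ := by
          gcongr
          · exact le_max_right _ _
          · linarith
  by_cases c5 : a < N⁻¹ / 2
  · have hb' : N⁻¹ ≤ b := by
      by_contra hcon
      exact c1 ⟨by linarith, by linarith⟩
    refine ⟨N ^ (d:ℝ) * (N * a) ^ (-σ) * (N * b) ^ (-(2 * s + d - σ)), 
      (H2 ⟨by linarith, hb'⟩).trans_eq (by rw [Real.rpow_natCast]; ring), fin _ ?_⟩
    exact (R2 ha hb hN hs (by linarith) (hge _ hb')).trans fA
  · have hb1 : b < N⁻¹ / 2 := by
      by_contra hcon
      exact c4 ⟨by linarith, by linarith⟩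
    have ha' : N⁻¹ ≤ a := by
      by_contra hcon
      exact c1 ⟨by linarith, by linarith⟩
    refine ⟨N ^ (d:ℝ) * (N * b) ^ (-σ) * (N * a) ^ (-(2 * s + d - σ)), 
      (H3 ⟨by linarith, ha'⟩).trans_eq (by rw [Real.rpow_natCast]; ring), fin _ ?_⟩
    exact (R3 ha hb hN hs (by linarith) (hge _ ha')).trans fB

theorem nontriv (d : ℕ) (hd : 3 ≤ d) : Nontrivial (EuclideanSpace ℝ (Fin d)) := by
  have : Nonempty (Fin d) := ⟨⟨0, by omega⟩⟩
  infer_instance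

theorem ae_ne_aux (d : ℕ) (hd : 3 ≤ d) (x : EuclideanSpace ℝ (Fin d)) :
    ∀ᵐ y : EuclideanSpace ℝ (Fin d), y ≠ x := by
  have := nontriv d hd
  exact compl_mem_ae_iff.2 (measure_singleton x)

theorem comparable {a b e : ℝ} (ha : 0 < a) (h1 : a / 2 ≤ b) (h2 : b ≤ 2 * a) :
    b ^ e ≤ 2 ^ |e| * a ^ e := by
  rcases le_total 0 e with h | h
  · rw [abs_of_nonneg h, ← Real.mul_rpow (by norm_num) ha.le]
    exact Real.rpow_le_rpow (by linarith) h2 h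
  · rw [abs_of_nonpos h, Real.rpow_neg (by norm_num), mul_comm, ← div_eq_mul_inv,
      ← Real.div_rpow ha.le (by norm_num)]
    exact Real.rpow_le_rpow_of_nonpos (by linarith) h1 h

theorem mid_aux (d : ℕ) (hd : 3 ≤ d) (s e : ℝ) (hs2 : s < 2) :
    ∃ C : ℝ, 0 ≤ C ∧ ∀ x : EuclideanSpace ℝ (Fin d), x ≠ 0 →
      ∫⁻ y, ENNReal.ofReal (if ‖x‖ / 2 ≤ ‖y‖ ∧ ‖y‖ ≤ 2 * ‖x‖ then
        ‖x - y‖ ^ (-(s + d - 2)) * ‖y‖ ^ e else 0) ≤ ENNReal.ofReal (C * ‖x‖ ^ (2 - s + e)) := by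
  obtain ⟨C, hC, H⟩ := ball_aux d hd (-(s + d - 2)) (by linarith)
  refine ⟨2 ^ |e| * C * 3 ^ (2 - s), by positivity, fun x hx => ?_⟩
  have hx' : 0 < ‖x‖ := norm_pos_iff.2 hx
  set G : EuclideanSpace ℝ (Fin d) → ℝ≥0∞ := fun z => 
    ENNReal.ofReal (if ‖z‖ ≤ 3 * ‖x‖ then ‖z‖ ^ (-(s + d - 2)) else 0) with hG
  calc _ ≤ ∫⁻ y, ENNReal.ofReal (2 ^ |e| * ‖x‖ ^ e) * G (x - y) := by
        apply lintegral_mono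
        intro y
        rw [hG]
        simp only
        rw [← ENNReal.ofReal_mul (by positivity)]
        apply ENNReal.ofReal_le_ofReal
        by_cases h : ‖x‖ / 2 ≤ ‖y‖ ∧ ‖y‖ ≤ 2 * ‖x‖
        · rw [if_pos h, if_pos (by linarith [norm_sub_le x y]), mul_comm]
          gcongr
          exact comparable hx' h.1 h.2
        · rw [if_neg h]
          split_ifs <;> positivity
    _ = ENNReal.ofReal (2 ^ |e| * ‖x‖ ^ e) * ∫⁻ z, G z := by
        rw [lintegral_const_mul' _ _ ENNReal.ofReal_ne_top, lintegral_sub_left_eq_self G x]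
    _ ≤ ENNReal.ofReal (2 ^ |e| * ‖x‖ ^ e) * ENNReal.ofReal (C * (3 * ‖x‖) ^ (d + -(s + d - 2))) := by
        gcongr
        exact H _ (by positivity)
    _ = _ := by
        rw [← ENNReal.ofReal_mul (by positivity)]
        congr 1
        rw [show (d:ℝ) + -(s + d - 2) = 2 - s by ring, Real.mul_rpow (by norm_num) hx'.le,
          Real.rpow_add hx']
        ring

theorem sum3 {α : Type*} [MeasurableSpace α] (μ : Measure α) (F f1 f2 f3 : α → ℝ)
    (u1 u2 u3 c1 c2 c3 : ℝ) (hu1 : 0 ≤ u1) (hu2 : 0 ≤ u2) (hu3 : 0 ≤ u3)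
    (hc1 : 0 ≤ c1) (hc2 : 0 ≤ c2) (hc3 : 0 ≤ c3) (m1 : Measurable f1) (m2 : Measurable f2)
    (h1 : ∫⁻ x, ENNReal.ofReal (f1 x) ∂μ ≤ ENNReal.ofReal c1)
    (h2 : ∫⁻ x, ENNReal.ofReal (f2 x) ∂μ ≤ ENNReal.ofReal c2)
    (h3 : ∫⁻ x, ENNReal.ofReal (f3 x) ∂μ ≤ ENNReal.ofReal c3)
    (hF : ∀ᵐ x ∂μ, F x ≤ u1 * f1 x + u2 * f2 x + u3 * f3 x) :
    ∫⁻ x, ENNReal.ofReal (F x) ∂μ ≤ ENNReal.ofReal (u1 * c1 + u2 * c2 + u3 * c3) := by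
  calc _ ≤ ∫⁻ x, (ENNReal.ofReal u1 * ENNReal.ofReal (f1 x) + ENNReal.ofReal u2 * ENNReal.ofReal (f2 x)
          + ENNReal.ofReal u3 * ENNReal.ofReal (f3 x)) ∂μ := by
        apply lintegral_mono_ae
        filter_upwards [hF] with x hx
        refine (ENNReal.ofReal_le_ofReal hx).trans (ENNReal.ofReal_add_le.trans ?_)
        rw [← ENNReal.ofReal_mul hu1, ← ENNReal.ofReal_mul hu2, ← ENNReal.ofReal_mul hu3]
        gcongr
        exact ENNReal.ofReal_add_le
    _ = ENNReal.ofReal u1 * ∫⁻ x, ENNReal.ofReal (f1 x) ∂μ + ENNReal.ofReal u2 * ∫⁻ x, ENNReal.ofReal (f2 x) ∂μ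
          + ENNReal.ofReal u3 * ∫⁻ x, ENNReal.ofReal (f3 x) ∂μ := by
        rw [lintegral_add_left (by fun_prop), lintegral_add_left (by fun_prop),
          lintegral_const_mul' _ _ ENNReal.ofReal_ne_top, lintegral_const_mul' _ _ ENNReal.ofReal_ne_top,
          lintegral_const_mul' _ _ ENNReal.ofReal_ne_top]
    _ ≤ ENNReal.ofReal u1 * ENNReal.ofReal c1 + ENNReal.ofReal u2 * ENNReal.ofReal c2 +
          ENNReal.ofReal u3 * ENNReal.ofReal c3 := by gcongr
    _ = _ := by
        rw [ENNReal.ofReal_add (by positivity) (by positivity),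
          ENNReal.ofReal_add (by positivity) (by positivity), ENNReal.ofReal_mul hu1,
          ENNReal.ofReal_mul hu2, ENNReal.ofReal_mul hu3]

noncomputable def HH (d : ℕ) (σ s : ℝ) (x y : EuclideanSpace ℝ (Fin d)) : ℝ :=
  kA d σ ‖x‖ ‖y‖ + kB d σ s ‖x‖ ‖y‖ + kE d s ‖x‖ ‖y‖ ‖x - y‖

theorem HH_nonneg (d : ℕ) (σ s : ℝ) (x y : EuclideanSpace ℝ (Fin d)) : 0 ≤ HH d σ s x y :=
  add_nonneg (add_nonneg (kA_nonneg (by positivity) (by positivity))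
    (kB_nonneg (by positivity) (by positivity))) (kE_nonneg (by positivity) (by positivity))

theorem HH_meas (d : ℕ) (σ s : ℝ) : Measurable (Function.uncurry (HH d σ s)) := by
  unfold HH kA kB kE Function.uncurry
  refine Measurable.add (Measurable.add ?_ ?_) ?_
  · exact Measurable.ite (measurableSet_le (by fun_prop) (by fun_prop)) (by fun_prop) (by fun_prop)
  · exact Measurable.ite (measurableSet_le (by fun_prop) (by fun_prop)) (by fun_prop) (by fun_prop)
  · refine Measurable.ite ?_ (by fun_prop) (by fun_prop)
    rw [Set.setOf_and]
    exact (measurableSet_le (by fun_prop) (by fun_prop)).inter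
      (measurableSet_le (by fun_prop) (by fun_prop))

theorem int1 (d : ℕ) (hd : 3 ≤ d) (σ s β : ℝ) (hs2 : s < 2) (h1 : σ < β) (h2 : β < d + s - σ) :
    ∃ C : ℝ, 0 ≤ C ∧ ∀ x : EuclideanSpace ℝ (Fin d), x ≠ 0 →
      ∫⁻ y, ENNReal.ofReal (HH d σ s x y * ‖y‖ ^ (-β)) ≤ ENNReal.ofReal (C * ‖x‖ ^ (-β)) := by
  obtain ⟨C1, hC1, H1⟩ := out_aux d hd (-(d - σ) - β) (by linarith)
  obtain ⟨C2, hC2, H2⟩ := ball_aux d hd (s - σ - β) (by linarith)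
  obtain ⟨C3, hC3, H3⟩ := mid_aux d hd s (-β) hs2
  refine ⟨C1 + C2 + C3, by positivity, fun x hx => ?_⟩
  have ha : 0 < ‖x‖ := norm_pos_iff.2 hx
  refine (sum3 volume (fun y => HH d σ s x y * ‖y‖ ^ (-β)) _ _ _ 
    (‖x‖ ^ (-σ)) (‖x‖ ^ (-(s + d - σ))) (‖x‖ ^ (s - 2)) _ _ _
    (by positivity) (by positivity) (by positivity) (by positivity) (by positivity) (by positivity)
    ?_ ?_ (H1 _ ha) (H2 _ ha) (H3 x hx) ?_).trans_eq ?_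
  · exact Measurable.ite (measurableSet_le (by fun_prop) (by fun_prop)) (by fun_prop) (by fun_prop)
  · exact Measurable.ite (measurableSet_le (by fun_prop) (by fun_prop)) (by fun_prop) (by fun_prop)
  · filter_upwards [ae_ne_aux d hd 0] with y hy
    have hb : 0 < ‖y‖ := norm_pos_iff.2 hy
    apply le_of_eq
    rw [HH, add_mul, add_mul]
    congr 1
    · congr 1
      · rw [kA, sub_eq_add_neg _ β, Real.rpow_add hb]; split_ifs <;> ring
      · rw [kB, sub_eq_add_neg _ β, Real.rpow_add hb]; split_ifs <;> ring
    · rw [kE]; split_ifs <;> ring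
  · congr 1
    have e1 : ‖x‖ ^ (-σ) * ‖x‖ ^ (d + (-(d - σ) - β)) = ‖x‖ ^ (-β) := by
      rw [← Real.rpow_add ha]; congr 1; ring
    have e2 : ‖x‖ ^ (-(s + d - σ)) * ‖x‖ ^ (d + (s - σ - β)) = ‖x‖ ^ (-β) := by
      rw [← Real.rpow_add ha]; congr 1; ring
    have e3 : ‖x‖ ^ (s - 2) * ‖x‖ ^ (2 - s + -β) = ‖x‖ ^ (-β) := by
      rw [← Real.rpow_add ha]; congr 1; ring
    linear_combination C1 * e1 + C2 * e2 + C3 * e3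

theorem int2 (d : ℕ) (hd : 3 ≤ d) (σ s β : ℝ) (hs2 : s < 2) (h1 : σ + β < d) (h2 : σ - s < β) :
    ∃ C : ℝ, 0 ≤ C ∧ ∀ y : EuclideanSpace ℝ (Fin d), y ≠ 0 →
      ∫⁻ x, ENNReal.ofReal (HH d σ s x y * ‖x‖ ^ (-β)) ≤ ENNReal.ofReal (C * ‖y‖ ^ (-β)) := by
  obtain ⟨C1, hC1, H1⟩ := ball_aux d hd (-σ - β) (by linarith)
  obtain ⟨C2, hC2, H2⟩ := out_aux d hd (-(s + d - σ) - β) (by linarith)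
  obtain ⟨C3, hC3, H3⟩ := mid_aux d hd s (s - 2 - β) hs2
  refine ⟨C1 + C2 + C3, by positivity, fun y hy => ?_⟩
  have hb : 0 < ‖y‖ := norm_pos_iff.2 hy
  refine (sum3 volume (fun x => HH d σ s x y * ‖x‖ ^ (-β)) _ _ _ 
    (‖y‖ ^ (-(d - σ))) (‖y‖ ^ (s - σ)) 1 _ _ _
    (by positivity) (by positivity) (by positivity) (by positivity) (by positivity) (by positivity)
    ?_ ?_ (H1 _ hb) (H2 _ hb) (H3 y hy) ?_).trans_eq ?_
  · exact Measurable.ite (measurableSet_le (by fun_prop) (by fun_prop)) (by fun_prop) (by fun_prop)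
  · exact Measurable.ite (measurableSet_le (by fun_prop) (by fun_prop)) (by fun_prop) (by fun_prop)
  · filter_upwards [ae_ne_aux d hd 0] with x hx
    have ha : 0 < ‖x‖ := norm_pos_iff.2 hx
    apply le_of_eq
    rw [HH, add_mul, add_mul]
    congr 1
    · congr 1
      · rw [kA, sub_eq_add_neg _ β, Real.rpow_add ha]; split_ifs <;> ring
      · rw [kB, sub_eq_add_neg _ β, Real.rpow_add ha]; split_ifs <;> ring
    · have : (‖x‖ / 2 ≤ ‖y‖ ∧ ‖y‖ ≤ 2 * ‖x‖) ↔ (‖y‖ / 2 ≤ ‖x‖ ∧ ‖x‖ ≤ 2 * ‖y‖) := by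
        constructor <;> rintro ⟨h, h'⟩ <;> constructor <;> linarith
      rw [kE, sub_eq_add_neg _ β, Real.rpow_add ha, norm_sub_rev y x]
      simp only [this]
      split_ifs <;> ring
  · congr 1
    have e1 : ‖y‖ ^ (-(d - σ)) * ‖y‖ ^ (d + (-σ - β)) = ‖y‖ ^ (-β) := by
      rw [← Real.rpow_add hb]; congr 1; ring
    have e2 : ‖y‖ ^ (s - σ) * ‖y‖ ^ (d + (-(s + d - σ) - β)) = ‖y‖ ^ (-β) := by
      rw [← Real.rpow_add hb]; congr 1; ring
    have e3 : ‖y‖ ^ (2 - s + (s - 2 - β)) = ‖y‖ ^ (-β) := by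
      congr 1; ring
    linear_combination C1 * e1 + C2 * e2 + C3 * e3

/-- Difference of square functions, case `-((d-2)/2)² ≤ a < 0` (i.e. `0 < σ ≤ (d-2)/2`):
if the kernels `K_N`, `N = 2^k`, satisfy the four regional bounds of
Lemma 6.1(2), then `‖∫ (∑_N N^s |K_N(x,y)|) |f(y)| dy‖_{L^p_x} ≤ C ‖ |y|^{-s} f ‖_{L^p}`
for `max{1, d/(d+s-σ)} < p < d/σ`. -/
theorem square_function_difference_neg (d : ℕ) (hd : 3 ≤ d) (σ s c p : ℝ)
    (hσ0 : 0 < σ) (hσ : σ ≤ ((d : ℝ) - 2) / 2)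
    (hs0 : 0 < s) (hs2 : s < 2) (hc : 0 < c)
    (hp1 : max 1 ((d : ℝ) / ((d : ℝ) + s - σ)) < p) (hp2 : p < (d : ℝ) / σ)
    (K : ℤ → EuclideanSpace ℝ (Fin d) → EuclideanSpace ℝ (Fin d) → ℝ)
    (hK_meas : ∀ k : ℤ, Measurable (Function.uncurry (K k)))
    (hK : ∀ M : ℝ, 0 < M → ∃ CM : ℝ, 0 < CM ∧
      ∀ (k : ℤ) (x y : EuclideanSpace ℝ (Fin d)), x ≠ 0 → y ≠ 0 →
        ((‖x‖ ≤ ((2 : ℝ) ^ k)⁻¹ ∧ ‖y‖ ≤ ((2 : ℝ) ^ k)⁻¹ →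
          |K k x y| ≤ CM * ((2 : ℝ) ^ k) ^ ((d : ℝ) - 2 * σ) * (‖x‖ * ‖y‖) ^ (-σ)) ∧
        (2 * ‖x‖ ≤ ((2 : ℝ) ^ k)⁻¹ ∧ ((2 : ℝ) ^ k)⁻¹ ≤ ‖y‖ →
          |K k x y| ≤ CM * ((2 : ℝ) ^ k) ^ d *
            ((2 : ℝ) ^ k * ‖x‖) ^ (-σ) * ((2 : ℝ) ^ k * ‖y‖) ^ (-M)) ∧
        (2 * ‖y‖ ≤ ((2 : ℝ) ^ k)⁻¹ ∧ ((2 : ℝ) ^ k)⁻¹ ≤ ‖x‖ →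
          |K k x y| ≤ CM * ((2 : ℝ) ^ k) ^ d *
            ((2 : ℝ) ^ k * ‖y‖) ^ (-σ) * ((2 : ℝ) ^ k * ‖x‖) ^ (-M)) ∧
        (((2 : ℝ) ^ k)⁻¹ / 2 ≤ ‖x‖ ∧ ((2 : ℝ) ^ k)⁻¹ / 2 ≤ ‖y‖ →
          |K k x y| ≤ CM * ((2 : ℝ) ^ k) ^ ((d : ℝ) - 2) / (‖x‖ + ‖y‖) ^ 2 *
            Real.exp (-c * ((2 : ℝ) ^ k) ^ 2 * ‖x - y‖ ^ 2)))) :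
    ∃ C : ℝ, 0 < C ∧ ∀ f : EuclideanSpace ℝ (Fin d) → ℂ, Measurable f →
      eLpNorm (fun x => ∫ y, (∑' k : ℤ, ((2 : ℝ) ^ k) ^ s * |K k x y|) * ‖f y‖)
        (ENNReal.ofReal p) volume ≤
      ENNReal.ofReal C *
        eLpNorm (fun y => ‖y‖ ^ (-s) * ‖f y‖) (ENNReal.ofReal p) volume := by
  have hnt := nontriv d hd
  have hd' : (3:ℝ) ≤ d := by exact_mod_cast hd
  have hp1' : 1 < p := lt_of_le_of_lt (le_max_left _ _) hp1
  have hp0 : 0 < p := by linarith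
  have hpd : (d : ℝ) / ((d : ℝ) + s - σ) < p := lt_of_le_of_lt (le_max_right _ _) hp1
  have hpq := Real.HolderConjugate.conjExponent hp1'
  set q := p.conjExponent with hq
  have hq0 : 0 < q := hpq.symm.pos
  set β := (d:ℝ) / p with hβ
  have hβ1 : σ < β := by
    rw [hβ, lt_div_iff₀ hp0]; rw [lt_div_iff₀ hσ0] at hp2; linarith
  have hβ2 : β < d + s - σ := by
    rw [hβ, div_lt_iff₀ hp0]
    rw [div_lt_iff₀ (by linarith)] at hpd
    linarith
  obtain ⟨CM, hCM, HK⟩ := hK (2 * s + d - σ) (by linarith)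
  obtain ⟨C0, hC0, HP⟩ := ptw d hd σ s c CM hσ0 hσ hs0 hc hCM
  obtain ⟨S, hS, HS⟩ := sum_aux s hs0
  obtain ⟨A, hA, HA⟩ := int1 d hd σ s β hs2 hβ1 hβ2
  obtain ⟨B, hB, HB⟩ := int2 d hd σ s (d - β) hs2 (by linarith) (by linarith)
  set D : ℝ≥0∞ := ENNReal.ofReal C0 * (ENNReal.ofReal S + ENNReal.ofReal S + ENNReal.ofReal S) with hD
  have hDt : D ≠ ∞ := by
    rw [hD]
    exact ENNReal.mul_ne_top ENNReal.ofReal_ne_top (by simp)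
  set W : ℝ≥0∞ := D * (ENNReal.ofReal A ^ (p / q) * ENNReal.ofReal B) ^ (1 / p) with hW
  have hWt : W ≠ ∞ := by
    refine ENNReal.mul_ne_top hDt (ENNReal.rpow_ne_top_of_nonneg (by positivity) (ENNReal.mul_ne_top
      (ENNReal.rpow_ne_top_of_nonneg (by positivity) ENNReal.ofReal_ne_top) ENNReal.ofReal_ne_top))
  refine ⟨W.toReal + 1, by positivity, fun f hf => ?_⟩
  set g : EuclideanSpace ℝ (Fin d) → ℝ≥0∞ := fun y => ‖‖y‖ ^ (-s) * ‖f y‖‖ₑ with hg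
  have hgm : Measurable g := by rw [hg]; fun_prop
  set k : EuclideanSpace ℝ (Fin d) → EuclideanSpace ℝ (Fin d) → ℝ≥0∞ :=
    fun x y => ENNReal.ofReal (HH d σ s x y) with hk
  have hkm : Measurable (Function.uncurry k) := (HH_meas d σ s).ennreal_ofReal
  have hpt : ∀ x : EuclideanSpace ℝ (Fin d), x ≠ 0 →
      ‖∫ y, (∑' k : ℤ, ((2 : ℝ) ^ k) ^ s * |K k x y|) * ‖f y‖‖ₑ ≤ D * ∫⁻ y, k x y * g y := by
    intro x hx
    refine (enorm_integral_le_lintegral_enorm _).trans ?_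
    rw [← lintegral_const_mul' _ _ hDt]
    apply lintegral_mono_ae
    filter_upwards [ae_ne_aux d hd 0, ae_ne_aux d hd x] with y hy hyx
    have ha : 0 < ‖x‖ := norm_pos_iff.2 hx
    have hb : 0 < ‖y‖ := norm_pos_iff.2 hy
    have hr : 0 < ‖x - y‖ := norm_pos_iff.2 (sub_ne_zero.2 hyx.symm)
    have t1 : ‖x‖ ≤ ‖y‖ + ‖x - y‖ := by
      have := norm_add_le y (x - y)
      simpa using this
    have t2 : ‖y‖ ≤ ‖x‖ + ‖x - y‖ := by
      have := norm_sub_le x (x - y)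
      simpa using this
    have hsum : ∑' k : ℤ, ‖((2 : ℝ) ^ k) ^ s * |K k x y|‖ₑ ≤
        ENNReal.ofReal (C0 * (HH d σ s x y * ‖y‖ ^ (-s))) *
          (ENNReal.ofReal S + ENNReal.ofReal S + ENNReal.ofReal S) := by
      calc _ ≤ ∑' k : ℤ, ENNReal.ofReal (C0 * (HH d σ s x y * ‖y‖ ^ (-s))) *
            (ENNReal.ofReal (ph s (2 ^ k * ‖x‖)) + ENNReal.ofReal (ph s (2 ^ k * ‖y‖))
              + ENNReal.ofReal (ph s (2 ^ k * ‖x - y‖))) := by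
            apply ENNReal.tsum_le_tsum
            intro n
            have hn := HK n x y hx hy
            have := HP (2 ^ n) ‖x‖ ‖y‖ ‖x - y‖ |K n x y| (by positivity) ha hb hr t1 t2
              hn.1 hn.2.1 hn.2.2.1 hn.2.2.2
            have pa := ph_nonneg (s := s) (t := 2 ^ n * ‖x‖) (by positivity)
            have pb := ph_nonneg (s := s) (t := 2 ^ n * ‖y‖) (by positivity)
            have pr := ph_nonneg (s := s) (t := 2 ^ n * ‖x - y‖) (by positivity)
            have hH := HH_nonneg d σ s x y
            rw [Real.enorm_of_nonneg (by positivity), ← ENNReal.ofReal_add pa pb,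
              ← ENNReal.ofReal_add (by positivity) pr, ← ENNReal.ofReal_mul (by positivity)]
            exact ENNReal.ofReal_le_ofReal this
        _ ≤ _ := by
            rw [ENNReal.tsum_mul_left, ENNReal.tsum_add, ENNReal.tsum_add]
            gcongr
            · exact HS _ ha
            · exact HS _ hb
            · exact HS _ hr
    rw [enorm_mul]
    calc _ ≤ (ENNReal.ofReal (C0 * (HH d σ s x y * ‖y‖ ^ (-s))) *
          (ENNReal.ofReal S + ENNReal.ofReal S + ENNReal.ofReal S)) * ‖‖f y‖‖ₑ := by
          gcongr
          exact enorm_tsum_le_tsum_enorm.trans hsum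
      _ = _ := by
          rw [hD, hk, hg]
          simp only
          rw [enorm_mul, Real.enorm_of_nonneg (by positivity : 0 ≤ ‖y‖ ^ (-s)),
            ENNReal.ofReal_mul hC0, ENNReal.ofReal_mul (HH_nonneg d σ s x y)]
          ring
  set h : EuclideanSpace ℝ (Fin d) → ℝ≥0∞ := fun x => ENNReal.ofReal (‖x‖ ^ (-(β / q))) with hh
  have hpow : ∀ x : EuclideanSpace ℝ (Fin d), x ≠ 0 → ∀ e, 0 < e →
      h x ^ e = ENNReal.ofReal (‖x‖ ^ (-(β / q * e))) := by
    intro x hx e he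
    rw [hh]
    simp only
    rw [ENNReal.ofReal_rpow_of_nonneg (by positivity) he.le, ← Real.rpow_mul (by positivity), neg_mul]
  have eq1 : β / q * q = β := by field_simp
  have eq2 : β / q * p = d - β := by
    have := hpq.symm.inv_add_inv_eq_one
    have e1 : q⁻¹ = 1 - p⁻¹ := by linarith
    rw [hβ, div_eq_mul_inv _ q, e1]
    field_simp
  have schur := schur_test volume k hkm h (by rw [hh]; fun_prop)
    (by
      filter_upwards [ae_ne_aux d hd 0] with x hx
      have ha : 0 < ‖x‖ := norm_pos_iff.2 hx
      rw [hh]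
      exact (ENNReal.ofReal_pos.2 (by positivity)).ne')
    (Filter.Eventually.of_forall fun x => ENNReal.ofReal_ne_top) p q hpq
    (ENNReal.ofReal A) (ENNReal.ofReal B)
    (by
      filter_upwards [ae_ne_aux d hd 0] with x hx
      rw [hpow x hx q hq0, eq1, ← ENNReal.ofReal_mul hA]
      refine le_trans (lintegral_mono_ae ?_) (HA x hx)
      filter_upwards [ae_ne_aux d hd 0] with y hy
      rw [hpow y hy q hq0, eq1, ← ENNReal.ofReal_mul (HH_nonneg d σ s x y)])
    (by
      filter_upwards [ae_ne_aux d hd 0] with y hy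
      rw [hpow y hy p hp0, eq2, ← ENNReal.ofReal_mul hB]
      refine le_trans (lintegral_mono_ae ?_) (HB y hy)
      filter_upwards [ae_ne_aux d hd 0] with x hx
      rw [hpow x hx p hp0, eq2, ← ENNReal.ofReal_mul (HH_nonneg d σ s x y)])
    g hgm
  have hpz : ENNReal.ofReal p ≠ 0 := (ENNReal.ofReal_pos.2 hp0).ne'
  rw [eLpNorm_eq_lintegral_rpow_enorm_toReal hpz ENNReal.ofReal_ne_top,
    eLpNorm_eq_lintegral_rpow_enorm_toReal hpz ENNReal.ofReal_ne_top, ENNReal.toReal_ofReal hp0.le]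
  calc _ ≤ (∫⁻ x, (D * ∫⁻ y, k x y * g y) ^ p) ^ (1 / p) := by
        gcongr ?_ ^ _
        apply lintegral_mono_ae
        filter_upwards [ae_ne_aux d hd 0] with x hx
        gcongr
        exact hpt x hx
    _ = (D ^ p * ∫⁻ x, (∫⁻ y, k x y * g y) ^ p) ^ (1 / p) := by
        rw [← lintegral_const_mul' _ _ (ENNReal.rpow_ne_top_of_nonneg hp0.le hDt)]
        congr 2
        ext x
        rw [ENNReal.mul_rpow_of_nonneg _ _ hp0.le]
    _ ≤ (D ^ p * (ENNReal.ofReal A ^ (p / q) * ENNReal.ofReal B * ∫⁻ y, g y ^ p)) ^ (1 / p) := by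
        gcongr
    _ = W * (∫⁻ y, g y ^ p) ^ (1 / p) := by
        rw [ENNReal.mul_rpow_of_nonneg _ _ (by positivity), ← ENNReal.rpow_mul,
          mul_one_div_cancel hp0.ne', ENNReal.rpow_one,
          ENNReal.mul_rpow_of_nonneg _ (∫⁻ y, g y ^ p) (by positivity), hW]
        ring
    _ ≤ _ := by
        gcongr
        calc W = ENNReal.ofReal W.toReal := (ENNReal.ofReal_toReal hWt).symm
          _ ≤ _ := ENNReal.ofReal_le_ofReal (by linarith)
end
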